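/- arXiv:2309.16350 — 2 statements merged into one kernel-verified Lean document; each statement's English description precedes it below -/
import Mathlib

section
/- Intrinsic Hölder space characterization (first part of the main theorem): for any α>0 and any u∈C^α, for every k∈ℕ₀ and multi-indices γ,β∈ℕ₀^d with 0 ≤ ϑk + (1+ϑ)|γ| + |β| < α, the derivative Y^k ∂_v^β ∂_x^γ u exists at every point of ℝ×ℝ^{2d}, belongs to C^{α−ϑk−(1+ϑ)|γ|−|β|}, and satisfies ‖Y^k ∂_v^β ∂_x^γ u‖_{C^{α−ϑk−(1+ϑ)|γ|−|β|}} ≤ ‖u‖_{C^α}. -/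
noncomputable section
open scoped BigOperators ENNReal

/-- Points of the Galilean group `ℝ × ℝ^d × ℝ^d`, written `z = (t, x, v)`. -/
abbrev Pt (d : ℕ) := ℝ × EuclideanSpace ℝ (Fin d) × EuclideanSpace ℝ (Fin d)

variable {d : ℕ}

/-- Flow of the drift field `Y = ⟨v, ∇ₓ⟩ + ∂ₜ`. -/
def flowY (τ : ℝ) (z : Pt d) : Pt d := (z.1 + τ, z.2.1 + τ • z.2.2, z.2.2)

/-- Flow of the field `Z_h = ⟨h, ∇_v⟩`. -/
def flowZ (h : EuclideanSpace ℝ (Fin d)) (τ : ℝ) (z : Pt d) : Pt d :=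
  (z.1, z.2.1, z.2.2 + τ • h)

/-- Flow of the constant field `⟨h, ∇ₓ⟩`. -/
def flowX (h : EuclideanSpace ℝ (Fin d)) (τ : ℝ) (z : Pt d) : Pt d :=
  (z.1, z.2.1 + τ • h, z.2.2)

/-- `u` has a Lie derivative at `z` along the flow `φ`. -/
def HasLieAt (φ : ℝ → Pt d → Pt d) (u : Pt d → ℝ) (z : Pt d) : Prop :=
  DifferentiableAt ℝ (fun τ => u (φ τ z)) 0

/-- Lie derivative along `Y` (junk value if it does not exist). -/
def lieY (u : Pt d → ℝ) (z : Pt d) : ℝ := deriv (fun τ => u (flowY τ z)) 0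

/-- Partial derivative `∂_{v_i}` as a Lie derivative along `Z_i`. -/
def dv (i : Fin d) (u : Pt d → ℝ) (z : Pt d) : ℝ :=
  deriv (fun τ => u (flowZ (EuclideanSpace.single i 1) τ z)) 0

/-- Partial derivative `∂_{x_i}`. -/
def dx (i : Fin d) (u : Pt d → ℝ) (z : Pt d) : ℝ :=
  deriv (fun τ => u (flowX (EuclideanSpace.single i 1) τ z)) 0

/-- The list of indices associated to a multi-index `β` (index `i` repeated `β i` times). -/
def idxList (β : Fin d → ℕ) : List (Fin d) := (List.ofFn fun i => List.replicate (β i) i).flatten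

/-- Iterated application of first-order operators along a list of indices. -/
def derivList (D : Fin d → (Pt d → ℝ) → Pt d → ℝ) : List (Fin d) → (Pt d → ℝ) → Pt d → ℝ
  | [], u => u
  | i :: l, u => D i (derivList D l u)

/-- `∂_v^β u`. -/
def dvPow (β : Fin d → ℕ) (u : Pt d → ℝ) : Pt d → ℝ := derivList dv (idxList β) u

/-- `∂_x^γ u`. -/
def dxPow (γ : Fin d → ℕ) (u : Pt d → ℝ) : Pt d → ℝ := derivList dx (idxList γ) u

/-- All the intermediate derivatives in an iterated derivative exist at every point. -/
def ExistsDList (φ : Fin d → ℝ → Pt d → Pt d) (D : Fin d → (Pt d → ℝ) → Pt d → ℝ) :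
    List (Fin d) → (Pt d → ℝ) → Prop
  | [], _ => True
  | i :: l, u => ExistsDList φ D l u ∧ ∀ z, HasLieAt (φ i) (derivList D l u) z

/-- `∂_v^β u` exists (at every point, at every stage). -/
def ExistsDvPow (β : Fin d → ℕ) (u : Pt d → ℝ) : Prop :=
  ExistsDList (fun i => flowZ (EuclideanSpace.single i 1)) dv (idxList β) u

/-- `∂_x^γ u` exists (at every point, at every stage). -/
def ExistsDxPow (γ : Fin d → ℕ) (u : Pt d → ℝ) : Prop :=
  ExistsDList (fun i => flowX (EuclideanSpace.single i 1)) dx (idxList γ) u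

/-- The iterated Lie derivatives `Y^j u`, `j = 1, …, k`, exist at every point. -/
def ExistsLieYIter (u : Pt d → ℝ) : ℕ → Prop
  | 0 => True
  | k + 1 => ExistsLieYIter u k ∧ ∀ z : Pt d, HasLieAt flowY (lieY^[k] u) z

/-- Hölder seminorm `‖u‖_{C^α_{Z_i}}`. -/
def semiZ (i : Fin d) (α : ℝ) (u : Pt d → ℝ) : ℝ≥0∞ :=
  ⨆ (z : Pt d) (τ : ℝ) (_ : τ ≠ 0),
    ENNReal.ofReal (|u (flowZ (EuclideanSpace.single i 1) τ z) - u z| / |τ| ^ α)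

/-- Hölder seminorm `‖u‖_{C^α_Y}`. -/
def semiY (ϑ α : ℝ) (u : Pt d → ℝ) : ℝ≥0∞ :=
  ⨆ (z : Pt d) (τ : ℝ) (_ : τ ≠ 0),
    ENNReal.ofReal (|u (flowY τ z) - u z| / |τ| ^ (α / ϑ))

open Classical in
/-- The intrinsic Hölder seminorm `‖u‖_{C^α}`, defined recursively (with fuel). -/
def hNormAux (ϑ : ℝ) : ℕ → ℝ → (Pt d → ℝ) → ℝ≥0∞
  | 0, α, u => semiY ϑ α u + ∑ i, semiZ i α u
  | n + 1, α, u =>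
    if α ≤ min 1 ϑ then semiY ϑ α u + ∑ i, semiZ i α u
    else if α ≤ max 1 ϑ then
      if ϑ < 1 then hNormAux ϑ n (α - ϑ) (lieY u) + ∑ i, semiZ i α u
      else semiY ϑ α u + ∑ i, hNormAux ϑ n (α - 1) (dv i u)
    else hNormAux ϑ n (α - ϑ) (lieY u) + ∑ i, hNormAux ϑ n (α - 1) (dv i u)

open Classical in
/-- Membership in the intrinsic Hölder space `C^α`, defined recursively (with fuel). -/
def memAux (ϑ : ℝ) : ℕ → ℝ → (Pt d → ℝ) → Prop
  | 0, α, u => hNormAux ϑ 0 α u ≠ ⊤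
  | n + 1, α, u =>
    if α ≤ min 1 ϑ then hNormAux ϑ (n + 1) α u ≠ ⊤
    else if α ≤ max 1 ϑ then
      if ϑ < 1 then
        (∀ z : Pt d, HasLieAt flowY u z) ∧ memAux ϑ n (α - ϑ) (lieY u) ∧
          hNormAux ϑ (n + 1) α u ≠ ⊤
      else
        (∀ (i : Fin d) (z : Pt d), HasLieAt (flowZ (EuclideanSpace.single i 1)) u z) ∧
          (∀ i : Fin d, memAux ϑ n (α - 1) (dv i u)) ∧ hNormAux ϑ (n + 1) α u ≠ ⊤
    else
      (∀ z : Pt d, HasLieAt flowY u z) ∧ memAux ϑ n (α - ϑ) (lieY u) ∧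
        (∀ (i : Fin d) (z : Pt d), HasLieAt (flowZ (EuclideanSpace.single i 1)) u z) ∧
          (∀ i : Fin d, memAux ϑ n (α - 1) (dv i u)) ∧ hNormAux ϑ (n + 1) α u ≠ ⊤

/-- Enough fuel for the recursion defining `C^α`. -/
def fuel (ϑ α : ℝ) : ℕ := Nat.ceil (α / min 1 ϑ) + 1

/-- The intrinsic Hölder seminorm `‖u‖_{C^α}` (value in `ℝ≥0∞`). -/
def holderNorm (ϑ α : ℝ) (u : Pt d → ℝ) : ℝ≥0∞ := hNormAux ϑ (fuel ϑ α) α u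

/-- `u ∈ C^α`. -/
def IsHolder (ϑ α : ℝ) (u : Pt d → ℝ) : Prop := memAux ϑ (fuel ϑ α) α u



lemma hasDerivAt_param_integral (F F' : ℝ → ℝ → ℝ) (hF : Continuous (fun p : ℝ × ℝ => F p.1 p.2))
    (hF' : Continuous (fun p : ℝ × ℝ => F' p.1 p.2))
    (h : ∀ x t, HasDerivAt (fun x => F x t) (F' x t) x) (a b x₀ : ℝ) :
    HasDerivAt (fun x => ∫ t in a..b, F x t) (∫ t in a..b, F' x₀ t) x₀ := by
  have hc : IsCompact ((Metric.closedBall x₀ 1) ×ˢ (Set.uIcc a b)) :=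
    (isCompact_closedBall x₀ 1).prod isCompact_uIcc
  obtain ⟨C, hC⟩ := hc.exists_bound_of_continuousOn hF'.continuousOn
  refine (intervalIntegral.hasDerivAt_integral_of_dominated_loc_of_deriv_le
    (s := Metric.closedBall x₀ 1) (bound := fun _ => C)
    (Metric.closedBall_mem_nhds x₀ one_pos) ?_ ?_ ?_ ?_ ?_ ?_).2
  · refine Filter.Eventually.of_forall fun x => ?_
    have : Continuous (F x) := hF.comp (by fun_prop : Continuous fun t : ℝ => (x, t))
    exact this.aestronglyMeasurable
  · have : Continuous (F x₀) := hF.comp (by fun_prop : Continuous fun t : ℝ => (x₀, t))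
    exact this.intervalIntegrable _ _
  · have : Continuous (F' x₀) := hF'.comp (by fun_prop : Continuous fun t : ℝ => (x₀, t))
    exact this.aestronglyMeasurable
  · refine Filter.Eventually.of_forall fun t ht x hx => ?_
    exact hC (x, t) ⟨hx, Set.uIoc_subset_uIcc ht⟩
  · exact intervalIntegrable_const
  · exact Filter.Eventually.of_forall fun t _ x _ => h x t

lemma hasDerivAt_moving_end (W : ℝ → ℝ → ℝ) (hW : Continuous (fun p : ℝ × ℝ => W p.1 p.2))
    (c κ : ℝ) : HasDerivAt (fun h => ∫ s in c..(c + κ * h), W h s) (κ * W 0 c) 0 := by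
  have e : (fun h => ∫ s in c..(c + κ * h), W h s)
      = fun h => h * (κ * ∫ r in (0:ℝ)..1, W h (c + (κ * h) * r)) := by
    funext h
    have := intervalIntegral.mul_integral_comp_add_mul (a := 0) (b := 1) (f := W h) (c := κ * h) (d := c)
    simp only [mul_zero, add_zero, mul_one] at this
    rw [← this]; ring
  rw [e]
  have hK : Continuous (fun h : ℝ => κ * ∫ r in (0:ℝ)..1, W h (c + (κ * h) * r)) := by
    refine continuous_const.mul ?_
    apply intervalIntegral.continuous_parametric_intervalIntegral_of_continuous'
    exact hW.comp (by fun_prop : Continuous fun p : ℝ × ℝ => (p.1, c + (κ * p.1) * p.2))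
  rw [hasDerivAt_iff_tendsto_slope_zero]
  have h0 := (hK.tendsto 0).mono_left (nhdsWithin_le_nhds (s := {0}ᶜ))
  have ev : (κ * ∫ r in (0:ℝ)..1, W 0 (c + (κ * 0) * r)) = κ * W 0 c := by simp
  rw [ev] at h0
  refine h0.congr' ?_
  filter_upwards [self_mem_nhdsWithin] with t ht
  have : t ≠ 0 := ht
  simp only [zero_add, zero_mul, sub_zero, smul_eq_mul]
  field_simp

lemma hasDerivAt_drift_integral (w g : ℝ → ℝ → ℝ → ℝ)
    (hw : Continuous (fun p : ℝ × ℝ × ℝ => w p.1 p.2.1 p.2.2))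
    (hg : Continuous (fun p : ℝ × ℝ × ℝ => g p.1 p.2.1 p.2.2))
    (hY : ∀ τ s η h, HasDerivAt (fun h => w (τ + h) (s + h * η) η) (g (τ + h) (s + h * η) η) h)
    (ε τ η : ℝ) :
    HasDerivAt (fun τ => ∫ s in (0:ℝ)..ε, w τ s η)
      ((∫ s in (0:ℝ)..ε, g τ s η) - η * (w τ ε η - w τ 0 η)) τ := by
  have cW : Continuous (fun p : ℝ × ℝ => w (τ + p.1) (p.2 + p.1 * η) η) :=
    hw.comp (by fun_prop : Continuous fun p : ℝ × ℝ => (τ + p.1, p.2 + p.1 * η, η))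
  have cG : Continuous (fun p : ℝ × ℝ => g (τ + p.1) (p.2 + p.1 * η) η) :=
    hg.comp (by fun_prop : Continuous fun p : ℝ × ℝ => (τ + p.1, p.2 + p.1 * η, η))
  have h1 := hasDerivAt_param_integral _ _ cW cG (fun h s => hY τ s η h) 0 ε 0
  have h2 := hasDerivAt_moving_end (fun h s => w (τ + h) (s + h * η) η) cW ε (-η)
  have h3 := hasDerivAt_moving_end (fun h s => w (τ + h) (s + h * η) η) cW 0 (-η)
  have h4 := (h1.add h2).sub h3
  have key : HasDerivAt (fun h => ∫ s in (0:ℝ)..ε, w (τ + h) s η)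
      ((∫ s in (0:ℝ)..ε, g τ s η) - η * (w τ ε η - w τ 0 η)) 0 := by
    refine (h4.congr_deriv ?_).congr_of_eventuallyEq (Filter.Eventually.of_forall fun h => ?_)
    · simp; ring
    · show (∫ s in (0:ℝ)..ε, w (τ + h) s η) = _
      have ci : ∀ a b, IntervalIntegrable (fun s => w (τ + h) (s + h * η) η)
          MeasureTheory.volume a b := fun a b =>
        (cW.comp (by fun_prop : Continuous fun s : ℝ => (h, s))).intervalIntegrable a b
      have hs := intervalIntegral.integral_comp_add_right (a := 0 + -η * h) (b := ε + -η * h)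
        (fun s => w (τ + h) s η) (h * η)
      have e1 : 0 + -η * h + h * η = 0 := by ring
      have e2 : ε + -η * h + h * η = ε := by ring
      rw [e1, e2] at hs
      simp only [Pi.add_apply, Pi.sub_apply]
      rw [← hs, intervalIntegral.integral_add_adjacent_intervals (ci _ _) (ci _ _),
        intervalIntegral.integral_interval_sub_left (ci _ _) (ci _ _)]
  have := HasDerivAt.comp_sub_const (f := fun h => ∫ s in (0:ℝ)..ε, w (τ + h) s η) τ τ
    (by simpa using key)
  simpa using this

lemma commutator_core (u f g a b : ℝ → ℝ → ℝ → ℝ)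
    (hu : Continuous (fun p : ℝ × ℝ × ℝ => u p.1 p.2.1 p.2.2))
    (hf : Continuous (fun p : ℝ × ℝ × ℝ => f p.1 p.2.1 p.2.2))
    (hg : Continuous (fun p : ℝ × ℝ × ℝ => g p.1 p.2.1 p.2.2))
    (ha : Continuous (fun p : ℝ × ℝ × ℝ => a p.1 p.2.1 p.2.2))
    (hb : Continuous (fun p : ℝ × ℝ × ℝ => b p.1 p.2.1 p.2.2))
    (hZu : ∀ τ s η, HasDerivAt (fun q => u τ s q) (f τ s η) η)
    (hZg : ∀ τ s η, HasDerivAt (fun q => g τ s q) (b τ s η) η)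
    (hYu : ∀ τ s η h, HasDerivAt (fun h => u (τ + h) (s + h * η) η) (g (τ + h) (s + h * η) η) h)
    (hYf : ∀ τ s η h, HasDerivAt (fun h => f (τ + h) (s + h * η) η) (a (τ + h) (s + h * η) η) h)
    (ε : ℝ) :
    u 0 ε 0 - u 0 0 0 = ∫ s in (0:ℝ)..ε, (b 0 s 0 - a 0 s 0) := by
  -- `A = ∂_τ ∂_η H`, `B = ∂_τ H`, where `H τ η = ∫ s in 0..ε, u τ s η`
  set A : ℝ → ℝ → ℝ := fun τ η =>
    (∫ s in (0:ℝ)..ε, a τ s η) - η * (f τ ε η - f τ 0 η) with hA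
  set B : ℝ → ℝ → ℝ := fun τ η =>
    (∫ s in (0:ℝ)..ε, g τ s η) - η * (u τ ε η - u τ 0 η) with hB
  have slice : ∀ (w : ℝ → ℝ → ℝ → ℝ), Continuous (fun p : ℝ × ℝ × ℝ => w p.1 p.2.1 p.2.2) →
      ∀ τ, Continuous (fun p : ℝ × ℝ => w τ p.2 p.1) := fun w hw τ =>
    hw.comp (by fun_prop : Continuous fun p : ℝ × ℝ => (τ, p.2, p.1))
  have slice' : ∀ (w : ℝ → ℝ → ℝ → ℝ), Continuous (fun p : ℝ × ℝ × ℝ => w p.1 p.2.1 p.2.2) →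
      ∀ s, Continuous (fun p : ℝ × ℝ => w p.1 s p.2) := fun w hw s =>
    hw.comp (by fun_prop : Continuous fun p : ℝ × ℝ => (p.1, s, p.2))
  have intc : ∀ (w : ℝ → ℝ → ℝ → ℝ), Continuous (fun p : ℝ × ℝ × ℝ => w p.1 p.2.1 p.2.2) →
      Continuous (fun p : ℝ × ℝ => ∫ s in (0:ℝ)..ε, w p.1 s p.2) := fun w hw => by
    apply intervalIntegral.continuous_parametric_intervalIntegral_of_continuous'
      (f := fun (p : ℝ × ℝ) (s : ℝ) => w p.1 s p.2)
    exact hw.comp (by fun_prop : Continuous fun p : (ℝ × ℝ) × ℝ => (p.1.1, p.2, p.1.2))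
  have cA : Continuous (fun p : ℝ × ℝ => A p.1 p.2) :=
    (intc a ha).sub (continuous_snd.mul ((slice' f hf ε).sub (slice' f hf 0)))
  have dH : ∀ τ η, HasDerivAt (fun q => ∫ s in (0:ℝ)..ε, u τ s q) (∫ s in (0:ℝ)..ε, f τ s η) η :=
    fun τ η => hasDerivAt_param_integral (fun q s => u τ s q) (fun q s => f τ s q)
      (slice u hu τ) (slice f hf τ) (fun q s => hZu τ s q) 0 ε η
  have dHτ : ∀ τ η, HasDerivAt (fun τ => ∫ s in (0:ℝ)..ε, u τ s η) (B τ η) τ := fun τ η =>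
    hasDerivAt_drift_integral u g hu hg hYu ε τ η
  have dfτ : ∀ τ η, HasDerivAt (fun τ => ∫ s in (0:ℝ)..ε, f τ s η) (A τ η) τ := fun τ η =>
    hasDerivAt_drift_integral f a hf ha hYf ε τ η
  have cF : Continuous (fun p : ℝ × ℝ => ∫ s in (0:ℝ)..ε, f p.1 s p.2) := intc f hf
  have ftc : ∀ τ η, (∫ s in (0:ℝ)..ε, u τ s η) - (∫ s in (0:ℝ)..ε, u τ s 0)
      = ∫ q in (0:ℝ)..η, ∫ s in (0:ℝ)..ε, f τ s q := fun τ η => by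
    rw [intervalIntegral.integral_eq_sub_of_hasDerivAt (fun q _ => dH τ q)]
    exact (cF.comp (by fun_prop : Continuous fun q : ℝ => (τ, q))).intervalIntegrable _ _
  have hBA : ∀ η, B 0 η - B 0 0 = ∫ q in (0:ℝ)..η, A 0 q := fun η => by
    have l := (dHτ 0 η).sub (dHτ 0 0)
    have r := hasDerivAt_param_integral (fun τ q => ∫ s in (0:ℝ)..ε, f τ s q) A cF cA dfτ 0 η 0
    have : ((fun τ => ∫ s in (0:ℝ)..ε, u τ s η) - fun τ => ∫ s in (0:ℝ)..ε, u τ s 0)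
      = fun τ => ∫ q in (0:ℝ)..η, ∫ s in (0:ℝ)..ε, f τ s q := funext fun τ => ftc τ η
    rw [this] at l
    exact l.unique r
  have cA0 : Continuous (A 0) := cA.comp (by fun_prop : Continuous fun q : ℝ => ((0:ℝ), q))
  have d1 : HasDerivAt (B 0) (A 0 0) 0 := by
    have : B 0 = fun η => B 0 0 + ∫ q in (0:ℝ)..η, A 0 q := funext fun η => by
      rw [← hBA η]; ring
    rw [this]
    exact (intervalIntegral.integral_hasDerivAt_right (cA0.intervalIntegrable _ _)
      (cA0.stronglyMeasurableAtFilter _ _) cA0.continuousAt).const_add _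
  have d2 : HasDerivAt (B 0) ((∫ s in (0:ℝ)..ε, b 0 s 0) - (u 0 ε 0 - u 0 0 0)) 0 := by
    have p1 := hasDerivAt_param_integral (fun q s => g 0 s q) (fun q s => b 0 s q)
      (slice g hg 0) (slice b hb 0) (fun q s => hZg 0 s q) 0 ε 0
    have p2 := (hasDerivAt_id (0:ℝ)).mul ((hZu 0 ε 0).sub (hZu 0 0 0))
    exact (p1.sub p2).congr_deriv (by simp)
  have e := d1.unique d2
  have ib : IntervalIntegrable (fun s => b 0 s 0) MeasureTheory.volume 0 ε :=
    (hb.comp (by fun_prop : Continuous fun s : ℝ => ((0:ℝ), s, (0:ℝ)))).intervalIntegrable _ _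
  have ia : IntervalIntegrable (fun s => a 0 s 0) MeasureTheory.volume 0 ε :=
    (ha.comp (by fun_prop : Continuous fun s : ℝ => ((0:ℝ), s, (0:ℝ)))).intervalIntegrable _ _
  rw [intervalIntegral.integral_sub ib ia]
  simp only [hA, zero_mul, sub_zero] at e
  linarith

open Filter Topology in
/-- Locally uniform smallness of increments along a flow. -/
def LU (φ : ℝ → Pt d → Pt d) (u : Pt d → ℝ) : Prop :=
  ∀ z₀, Tendsto (fun p : ℝ × Pt d => u (φ p.1 p.2) - u p.2) (𝓝 (0, z₀)) (𝓝 0)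

lemma flowY_add (τ h : ℝ) (z : Pt d) : flowY (τ + h) z = flowY h (flowY τ z) := by
  simp only [flowY, add_smul, add_assoc]

lemma flowZ_add (e : EuclideanSpace ℝ (Fin d)) (τ h : ℝ) (z : Pt d) :
    flowZ e (τ + h) z = flowZ e h (flowZ e τ z) := by
  simp only [flowZ, add_smul, add_assoc]

lemma flowY_zero (z : Pt d) : flowY 0 z = z := by simp [flowY]

lemma flowZ_zero (e : EuclideanSpace ℝ (Fin d)) (z : Pt d) : flowZ e 0 z = z := by simp [flowZ]

lemma flowY_cont : Continuous (fun p : ℝ × Pt d => flowY p.1 p.2) := by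
  unfold flowY; fun_prop

lemma flowZ_cont (e : EuclideanSpace ℝ (Fin d)) :
    Continuous (fun p : ℝ × Pt d => flowZ e p.1 p.2) := by
  unfold flowZ; fun_prop

lemma hasDerivAt_flow (φ : ℝ → Pt d → Pt d) (hadd : ∀ τ h z, φ (τ + h) z = φ h (φ τ z))
    (u : Pt d → ℝ) (H : ∀ z, HasLieAt φ u z) (z : Pt d) (τ : ℝ) :
    HasDerivAt (fun τ => u (φ τ z)) (deriv (fun h => u (φ h (φ τ z))) 0) τ := by
  have h0 : HasDerivAt (fun h => u (φ h (φ τ z))) (deriv (fun h => u (φ h (φ τ z))) 0) (τ - τ) := by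
    rw [sub_self]; exact (H (φ τ z)).hasDerivAt
  have := HasDerivAt.comp_sub_const τ τ h0
  refine this.congr_of_eventuallyEq (Filter.Eventually.of_forall fun s => ?_)
  simp only
  rw [← hadd]; congr 2; ring

lemma hasDerivAt_flowY (u : Pt d → ℝ) (H : ∀ z, HasLieAt flowY u z) (z : Pt d) (τ : ℝ) :
    HasDerivAt (fun τ => u (flowY τ z)) (lieY u (flowY τ z)) τ :=
  hasDerivAt_flow flowY flowY_add u H z τ

lemma hasDerivAt_flowZ (i : Fin d) (u : Pt d → ℝ)
    (H : ∀ z, HasLieAt (flowZ (EuclideanSpace.single i 1)) u z) (z : Pt d) (τ : ℝ) :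
    HasDerivAt (fun τ => u (flowZ (EuclideanSpace.single i 1) τ z))
      (dv i u (flowZ (EuclideanSpace.single i 1) τ z)) τ :=
  hasDerivAt_flow _ (flowZ_add _) u H z τ

open Filter Topology in
lemma LU_of_deriv (φ : ℝ → Pt d → Pt d) (hφ : Continuous (fun p : ℝ × Pt d => φ p.1 p.2))
    (h0 : ∀ z, φ 0 z = z) (u D : Pt d → ℝ) (hD : Continuous D)
    (H : ∀ z τ, HasDerivAt (fun τ => u (φ τ z)) (D (φ τ z)) τ) : LU φ u := by
  intro z₀
  have hc : Continuous (fun p : ℝ × Pt d => |D (φ p.1 p.2)|) := (hD.comp hφ).abs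
  have hev : ∀ᶠ p : ℝ × Pt d in 𝓝 (0, z₀), |D (φ p.1 p.2)| < |D z₀| + 1 := by
    apply hc.continuousAt.eventually_lt_const
    simp only [h0]; linarith
  obtain ⟨δ, hδ, hb⟩ := Metric.eventually_nhds_iff.1 hev
  have hnear : ∀ᶠ p : ℝ × Pt d in 𝓝 (0, z₀), dist p (0, z₀) < δ := Metric.ball_mem_nhds _ hδ
  have hlim : Tendsto (fun p : ℝ × Pt d => (|D z₀| + 1) * |p.1|) (𝓝 (0, z₀)) (𝓝 0) := by
    have : Continuous (fun p : ℝ × Pt d => (|D z₀| + 1) * |p.1|) := by fun_prop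
    simpa using this.tendsto (0, z₀)
  refine squeeze_zero_norm' ?_ hlim
  filter_upwards [hnear] with p hp
  rw [Prod.dist_eq, max_lt_iff] at hp
  have mv := (convex_ball (0:ℝ) δ).norm_image_sub_le_of_norm_hasDerivWithin_le
    (f := fun τ => u (φ τ p.2)) (f' := fun τ => D (φ τ p.2)) (C := |D z₀| + 1) (x := 0) (y := p.1)
    (fun τ _ => (H p.2 τ).hasDerivWithinAt)
    (fun τ hτ => (hb (y := (τ, p.2)) (by
      rw [Prod.dist_eq, max_lt_iff]; exact ⟨hτ, hp.2⟩)).le)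
    (Metric.mem_ball_self hδ) hp.1
  simpa [h0] using mv

open Filter Topology in
lemma LU_of_semi (φ : ℝ → Pt d → Pt d) (h0 : ∀ z, φ 0 z = z) (u : Pt d → ℝ) (p : ℝ) (hp : 0 < p)
    (H : (⨆ (z : Pt d) (τ : ℝ) (_ : τ ≠ 0), ENNReal.ofReal (|u (φ τ z) - u z| / |τ| ^ p)) ≠ ⊤) :
    LU φ u := by
  intro z₀
  set C := (⨆ (z : Pt d) (τ : ℝ) (_ : τ ≠ 0), ENNReal.ofReal (|u (φ τ z) - u z| / |τ| ^ p)) with hC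
  have hlim : Tendsto (fun q : ℝ × Pt d => C.toReal * |q.1| ^ p) (𝓝 (0, z₀)) (𝓝 0) := by
    have : Continuous (fun q : ℝ × Pt d => C.toReal * |q.1| ^ p) :=
      continuous_const.mul ((continuous_fst.abs).rpow_const fun _ => Or.inr hp.le)
    simpa [Real.zero_rpow hp.ne'] using this.tendsto (0, z₀)
  refine squeeze_zero_norm (fun q => ?_) hlim
  obtain ⟨τ, z⟩ := q
  rcases eq_or_ne τ 0 with rfl | hτ
  · simp only [h0, sub_self, norm_zero]; positivity
  · have hle : ENNReal.ofReal (|u (φ τ z) - u z| / |τ| ^ p) ≤ C :=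
      le_iSup_of_le z (le_iSup_of_le τ (le_iSup_of_le hτ le_rfl))
    have h1 : |u (φ τ z) - u z| / |τ| ^ p ≤ C.toReal :=
      (ENNReal.ofReal_le_iff_le_toReal H).1 hle
    have hpos : 0 < |τ| ^ p := Real.rpow_pos_of_pos (abs_pos.2 hτ) p
    rw [div_le_iff₀ hpos] at h1
    exact h1

open Filter Topology in
lemma LU.comp {φ : ℝ → Pt d → Pt d} {u : Pt d → ℝ} (h : LU φ u) {X : Type*} {l : Filter X}
    {s : X → ℝ} {q : X → Pt d} {z₀ : Pt d} (hs : Tendsto s l (𝓝 0)) (hq : Tendsto q l (𝓝 z₀)) :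
    Tendsto (fun x => u (φ (s x) (q x)) - u (q x)) l (𝓝 0) :=
  (h z₀).comp (hs.prodMk_nhds hq)

lemma sum_single_eq (h : EuclideanSpace ℝ (Fin d)) :
    ∑ i, h i • EuclideanSpace.single i (1:ℝ) = h := by
  ext j
  simp [Finset.sum_apply, Pi.single_apply]

open Filter Topology in
lemma LU_vec {u : Pt d → ℝ} (hZ : ∀ i, LU (flowZ (EuclideanSpace.single i 1)) u)
    {X : Type*} {l : Filter X} {h : X → EuclideanSpace ℝ (Fin d)} {q : X → Pt d} {z₀ : Pt d}
    (hh : Tendsto h l (𝓝 0)) (hq : Tendsto q l (𝓝 z₀)) :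
    Tendsto (fun x => u ((q x).1, (q x).2.1, (q x).2.2 + h x) - u (q x)) l (𝓝 0) := by
  classical
  have hi : ∀ i, Tendsto (fun x => h x i) l (𝓝 0) := fun i => by
    have hc : Continuous (fun w : EuclideanSpace ℝ (Fin d) => w i) := by fun_prop
    have := (hc.tendsto 0).comp hh
    simpa [Function.comp_def] using this
  have hS : ∀ S : Finset (Fin d), Tendsto
      (fun x => ∑ i ∈ S, h x i • EuclideanSpace.single i (1:ℝ)) l (𝓝 0) := fun S => by
    have := tendsto_finsetSum S (fun i _ => (hi i).smul_const (EuclideanSpace.single i (1:ℝ)))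
    simpa using this
  have hv : Tendsto (fun x => (q x).2.2) l (𝓝 z₀.2.2) :=
    ((continuous_snd.comp continuous_snd).tendsto z₀).comp hq
  have hx : Tendsto (fun x => (q x).2.1) l (𝓝 z₀.2.1) :=
    ((continuous_fst.comp continuous_snd).tendsto z₀).comp hq
  have ht : Tendsto (fun x => (q x).1) l (𝓝 z₀.1) := (continuous_fst.tendsto z₀).comp hq
  have main : ∀ S : Finset (Fin d), Tendsto (fun x => u ((q x).1, (q x).2.1,
      (q x).2.2 + ∑ i ∈ S, h x i • EuclideanSpace.single i (1:ℝ)) - u (q x)) l (𝓝 0) := by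
    intro S
    induction S using Finset.induction_on with
    | empty => simpa using tendsto_const_nhds
    | insert a S ha ih =>
      have hq' : Tendsto (fun x => ((q x).1, (q x).2.1,
          (q x).2.2 + ∑ i ∈ S, h x i • EuclideanSpace.single i (1:ℝ))) l (𝓝 z₀) := by
        have := ht.prodMk_nhds (hx.prodMk_nhds (hv.add (hS S)))
        simpa using this
      have h2 := ((hZ a).comp (hi a) hq').add ih
      rw [add_zero] at h2
      refine h2.congr fun x => ?_
      simp only [flowZ, Finset.sum_insert ha]
      rw [sub_add_sub_cancel, add_assoc, add_comm (∑ i ∈ S, _)]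
  have := main Finset.univ
  simpa only [sum_single_eq] using this

open Filter Topology in
lemma continuous_of_LU {u : Pt d → ℝ} (hY : LU flowY u)
    (hZ : ∀ i, LU (flowZ (EuclideanSpace.single i 1)) u) : Continuous u := by
  rw [continuous_iff_continuousAt]
  intro z₀
  obtain ⟨t₀, x₀, v₀⟩ := z₀
  set l := 𝓝 ((t₀, x₀, v₀) : Pt d)
  have ht : Tendsto (fun z : Pt d => z.1) l (𝓝 t₀) := continuous_fst.tendsto (t₀, x₀, v₀)
  have hx : Tendsto (fun z : Pt d => z.2.1) l (𝓝 x₀) :=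
    (continuous_fst.comp continuous_snd).tendsto (t₀, x₀, v₀)
  have hv : Tendsto (fun z : Pt d => z.2.2) l (𝓝 v₀) :=
    (continuous_snd.comp continuous_snd).tendsto (t₀, x₀, v₀)
  have hdt : Tendsto (fun z : Pt d => t₀ - z.1) l (𝓝 0) := by simpa using ht.const_sub t₀
  have hdv : Tendsto (fun z : Pt d => v₀ - z.2.2) l (𝓝 0) := by simpa using hv.const_sub v₀
  -- first leg
  have L1 := LU_vec hZ hdv (q := fun z => z) (l := l) tendsto_id
  -- second leg
  have q2 : Tendsto (fun z : Pt d => (z.1, z.2.1, z.2.2 + (v₀ - z.2.2))) l (𝓝 (t₀, x₀, v₀)) := by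
    refine ht.prodMk_nhds (hx.prodMk_nhds ?_)
    simp
  have L2 := hY.comp hdt q2
  -- commutator
  set y : Pt d → EuclideanSpace ℝ (Fin d) := fun z => x₀ - (z.2.1 + (t₀ - z.1) • v₀) with hy
  have hy0 : Tendsto y l (𝓝 0) := by
    have := (hx.add (hdt.smul_const v₀)).const_sub x₀
    simpa using this
  set σ : Pt d → ℝ := fun z => Real.sqrt ‖y z‖ with hσ
  have hσ0 : Tendsto σ l (𝓝 0) := by
    have := (Real.continuous_sqrt.tendsto _).comp hy0.norm
    simpa [Function.comp_def] using this
  set h : Pt d → EuclideanSpace ℝ (Fin d) := fun z => (σ z)⁻¹ • y z with hh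
  have hh0 : Tendsto h l (𝓝 0) := by
    refine squeeze_zero_norm (fun z => ?_) hσ0
    have hn : ‖h z‖ = (σ z)⁻¹ * ‖y z‖ := by
      rw [hh, norm_smul, norm_inv, Real.norm_of_nonneg (Real.sqrt_nonneg _)]
    rw [hn]
    have e : ‖y z‖ = σ z * σ z := (Real.mul_self_sqrt (norm_nonneg _)).symm
    rw [e]
    rcases eq_or_ne (σ z) 0 with h0 | h0
    · simp [h0]
    · rw [inv_mul_cancel_left₀ h0]
  have hσh : ∀ z, σ z • h z = y z := fun z => by
    rcases eq_or_ne (σ z) 0 with h0 | h0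
    · have : ‖y z‖ = σ z * σ z := (Real.mul_self_sqrt (norm_nonneg _)).symm
      rw [h0, mul_zero, norm_eq_zero] at this
      rw [this, h0, zero_smul]
    · rw [hh, smul_inv_smul₀ h0]
  have hxy : Tendsto (fun z => x₀ - y z) l (𝓝 x₀) := by simpa using hy0.const_sub x₀
  have q3 : Tendsto (fun z => ((t₀, x₀ - y z, v₀) : Pt d)) l (𝓝 (t₀, x₀, v₀)) :=
    tendsto_const_nhds.prodMk_nhds (hxy.prodMk_nhds tendsto_const_nhds)
  have L3 := LU_vec hZ hh0 q3
  have hvh : Tendsto (fun z => v₀ + h z) l (𝓝 v₀) := by simpa using hh0.const_add v₀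
  have q4 : Tendsto (fun z => ((t₀, x₀ - y z, v₀ + h z) : Pt d)) l (𝓝 (t₀, x₀, v₀)) :=
    tendsto_const_nhds.prodMk_nhds (hxy.prodMk_nhds hvh)
  have L4 := hY.comp hσ0 q4
  have q5 : Tendsto (fun z => flowY (σ z) ((t₀, x₀ - y z, v₀ + h z) : Pt d)) l
      (𝓝 (t₀, x₀, v₀)) := by
    have := (flowY_cont.tendsto ((0:ℝ), ((t₀, x₀, v₀) : Pt d))).comp (hσ0.prodMk_nhds q4)
    simpa [flowY_zero, Function.comp_def] using this
  have hnh : Tendsto (fun z => - h z) l (𝓝 0) := by simpa using hh0.neg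
  have L5 := LU_vec hZ hnh q5
  have q6 : Tendsto (fun z => ((t₀ + σ z, x₀ + σ z • v₀, v₀) : Pt d)) l (𝓝 (t₀, x₀, v₀)) := by
    refine Tendsto.prodMk_nhds ?_ (Tendsto.prodMk_nhds ?_ tendsto_const_nhds)
    · simpa using hσ0.const_add t₀
    · simpa using (hσ0.smul_const v₀).const_add x₀
  have hnσ : Tendsto (fun z => - σ z) l (𝓝 0) := by simpa using hσ0.neg
  have L6 := hY.comp hnσ q6
  have tot := ((((L1.add L2).add L3).add L4).add L5).add L6
  have fin : Tendsto (fun z => u (t₀, x₀, v₀) - u z) l (𝓝 0) := by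
    simp only [add_zero] at tot
    refine tot.congr fun z => ?_
    have e2 : flowY (t₀ - z.1) ((z.1, z.2.1, z.2.2 + (v₀ - z.2.2)) : Pt d)
        = (t₀, x₀ - y z, v₀) := by
      simp [flowY, hy]
    have e5 : (((flowY (σ z) ((t₀, x₀ - y z, v₀ + h z) : Pt d)).1,
        (flowY (σ z) ((t₀, x₀ - y z, v₀ + h z) : Pt d)).2.1,
        (flowY (σ z) ((t₀, x₀ - y z, v₀ + h z) : Pt d)).2.2 + -h z) : Pt d)
        = (t₀ + σ z, x₀ + σ z • v₀, v₀) := by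
      simp only [flowY, smul_add, hσh]
      refine Prod.ext rfl (Prod.ext ?_ ?_)
      · simp only; abel
      · simp only; abel
    have e6 : flowY (-σ z) ((t₀ + σ z, x₀ + σ z • v₀, v₀) : Pt d) = (t₀, x₀, v₀) := by
      simp [flowY]
    rw [e2, e5, e6]
    ring
  have := fin.const_sub (u (t₀, x₀, v₀))
  simpa [ContinuousAt] using this

/-! ### Recursion -/

lemma hN_succ (ϑ : ℝ) (n : ℕ) (α : ℝ) (u : Pt d → ℝ) : hNormAux ϑ (n + 1) α u =
    if α ≤ min 1 ϑ then semiY ϑ α u + ∑ i, semiZ i α u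
    else if α ≤ max 1 ϑ then
      if ϑ < 1 then hNormAux ϑ n (α - ϑ) (lieY u) + ∑ i, semiZ i α u
      else semiY ϑ α u + ∑ i, hNormAux ϑ n (α - 1) (dv i u)
    else hNormAux ϑ n (α - ϑ) (lieY u) + ∑ i, hNormAux ϑ n (α - 1) (dv i u) := by
  rw [hNormAux]

lemma mem_succ (ϑ : ℝ) (n : ℕ) (α : ℝ) (u : Pt d → ℝ) : memAux ϑ (n + 1) α u ↔
    if α ≤ min 1 ϑ then hNormAux ϑ (n + 1) α u ≠ ⊤
    else if α ≤ max 1 ϑ then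
      if ϑ < 1 then
        (∀ z : Pt d, HasLieAt flowY u z) ∧ memAux ϑ n (α - ϑ) (lieY u) ∧
          hNormAux ϑ (n + 1) α u ≠ ⊤
      else
        (∀ (i : Fin d) (z : Pt d), HasLieAt (flowZ (EuclideanSpace.single i 1)) u z) ∧
          (∀ i : Fin d, memAux ϑ n (α - 1) (dv i u)) ∧ hNormAux ϑ (n + 1) α u ≠ ⊤
    else
      (∀ z : Pt d, HasLieAt flowY u z) ∧ memAux ϑ n (α - ϑ) (lieY u) ∧
        (∀ (i : Fin d) (z : Pt d), HasLieAt (flowZ (EuclideanSpace.single i 1)) u z) ∧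
          (∀ i : Fin d, memAux ϑ n (α - 1) (dv i u)) ∧ hNormAux ϑ (n + 1) α u ≠ ⊤ := by
  rw [memAux]

lemma fuel_aux {ϑ α : ℝ} {n : ℕ} (h : α ≤ ((n + 1 : ℕ) + 1 : ℝ) * min 1 ϑ) :
    α - ϑ ≤ ((n : ℝ) + 1) * min 1 ϑ ∧ α - 1 ≤ ((n : ℝ) + 1) * min 1 ϑ := by
  have h1 := min_le_left 1 ϑ
  have h2 := min_le_right 1 ϑ
  push_cast at h
  constructor <;> linarith

lemma hN_stable (ϑ : ℝ) : ∀ (n : ℕ) (α : ℝ) (u : Pt d → ℝ), α ≤ ((n : ℝ) + 1) * min 1 ϑ →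
    hNormAux ϑ (n + 1) α u = hNormAux ϑ n α u := by
  intro n
  induction n with
  | zero =>
    intro α u h
    rw [hN_succ, if_pos (by simpa using h), hNormAux]
  | succ n ih =>
    intro α u h
    obtain ⟨h1, h2⟩ := fuel_aux h
    rw [hN_succ, hN_succ ϑ n α u, ih _ _ h1, Finset.sum_congr rfl fun i _ => ih _ (dv i u) h2]

lemma mem_stable (ϑ : ℝ) : ∀ (n : ℕ) (α : ℝ) (u : Pt d → ℝ), α ≤ ((n : ℝ) + 1) * min 1 ϑ →
    (memAux ϑ (n + 1) α u ↔ memAux ϑ n α u) := by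
  intro n
  induction n with
  | zero =>
    intro α u h
    rw [mem_succ, if_pos (by simpa using h), hN_stable _ _ _ _ h, memAux]
  | succ n ih =>
    intro α u h
    obtain ⟨h1, h2⟩ := fuel_aux h
    rw [mem_succ, mem_succ ϑ n α u, ih _ _ h1, hN_stable _ _ _ _ h]
    simp only [fun i => ih _ (dv i u) h2]

lemma stable_le {ϑ : ℝ} (hϑ : 0 < ϑ) {n : ℕ} {α : ℝ} (u : Pt d → ℝ)
    (h : α ≤ ((n : ℝ) + 1) * min 1 ϑ) (m : ℕ) :
    hNormAux ϑ (n + m) α u = hNormAux ϑ n α u ∧ (memAux ϑ (n + m) α u ↔ memAux ϑ n α u) := by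
  have hμ : 0 < min 1 ϑ := lt_min one_pos hϑ
  induction m with
  | zero => simp
  | succ m ih =>
    have : α ≤ (((n + m : ℕ) : ℝ) + 1) * min 1 ϑ := h.trans (by
      push_cast
      have : 0 ≤ (m : ℝ) := Nat.cast_nonneg m
      nlinarith)
    rw [← add_assoc, hN_stable _ _ _ _ this, mem_stable _ _ _ _ this]
    exact ih

lemma fuel_ok {ϑ : ℝ} (hϑ : 0 < ϑ) (α : ℝ) : α ≤ (fuel ϑ α : ℝ) * min 1 ϑ := by
  have hμ : 0 < min 1 ϑ := lt_min one_pos hϑ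
  have := Nat.le_ceil (α / min 1 ϑ)
  rw [← div_le_iff₀ hμ]
  unfold fuel
  push_cast
  linarith

lemma holder_eq {ϑ : ℝ} (hϑ : 0 < ϑ) {n : ℕ} {α : ℝ} (u : Pt d → ℝ)
    (h : α ≤ ((n : ℝ) + 1) * min 1 ϑ) :
    holderNorm ϑ α u = hNormAux ϑ n α u ∧ (IsHolder ϑ α u ↔ memAux ϑ n α u) := by
  have hμ : 0 < min 1 ϑ := lt_min one_pos hϑ
  have hf : α ≤ ((fuel ϑ α : ℝ) + 1) * min 1 ϑ := by
    have := fuel_ok hϑ α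
    linarith
  have a := stable_le hϑ u h (fuel ϑ α)
  have b := stable_le hϑ u hf n
  rw [add_comm] at b
  unfold holderNorm IsHolder
  exact ⟨b.1.symm.trans a.1, b.2.symm.trans a.2⟩

lemma mem_ne_top (ϑ : ℝ) (n : ℕ) (α : ℝ) (u : Pt d → ℝ) (h : memAux ϑ n α u) :
    hNormAux ϑ n α u ≠ ⊤ := by
  cases n with
  | zero => rw [memAux] at h; exact h
  | succ n =>
    rw [mem_succ] at h
    split_ifs at h
    · exact h
    · exact h.2.2
    · exact h.2.2
    · exact h.2.2.2.2

lemma LUY_of_semi {ϑ α : ℝ} (hϑ : 0 < ϑ) (hα : 0 < α) {u : Pt d → ℝ} (h : semiY ϑ α u ≠ ⊤) :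
    LU flowY u := LU_of_semi flowY flowY_zero u (α / ϑ) (div_pos hα hϑ) h

lemma LUZ_of_semi {α : ℝ} (hα : 0 < α) {u : Pt d → ℝ} (h : ∑ i, semiZ i α u ≠ ⊤) (i : Fin d) :
    LU (flowZ (EuclideanSpace.single i 1)) u :=
  LU_of_semi _ (flowZ_zero _) u α hα (ENNReal.sum_ne_top.1 h i (Finset.mem_univ i))

lemma LUY_of_lie {u : Pt d → ℝ} (H : ∀ z, HasLieAt flowY u z) (hc : Continuous (lieY u)) :
    LU flowY u := LU_of_deriv _ flowY_cont flowY_zero u _ hc (hasDerivAt_flowY u H)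

lemma LUZ_of_lie {u : Pt d → ℝ} (i : Fin d)
    (H : ∀ z, HasLieAt (flowZ (EuclideanSpace.single i 1)) u z) (hc : Continuous (dv i u)) :
    LU (flowZ (EuclideanSpace.single i 1)) u :=
  LU_of_deriv _ (flowZ_cont _) (flowZ_zero _) u _ hc (hasDerivAt_flowZ i u H)

lemma mem_continuous {ϑ : ℝ} (hϑ : 0 < ϑ) : ∀ (n : ℕ) (α : ℝ) (u : Pt d → ℝ), 0 < α →
    memAux ϑ n α u → Continuous u := by
  intro n
  induction n with
  | zero =>
    intro α u hα h
    rw [memAux, hNormAux, ENNReal.add_ne_top] at h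
    exact continuous_of_LU (LUY_of_semi hϑ hα h.1) (LUZ_of_semi hα h.2)
  | succ n ih =>
    intro α u hα h
    rw [mem_succ, hN_succ] at h
    split_ifs at h with c1 c2 c3
    · rw [ENNReal.add_ne_top] at h
      exact continuous_of_LU (LUY_of_semi hϑ hα h.1) (LUZ_of_semi hα h.2)
    · obtain ⟨h1, h2, h3⟩ := h
      rw [ENNReal.add_ne_top] at h3
      have : ϑ < α := by
        rw [min_eq_right c3.le] at c1; linarith
      exact continuous_of_LU (LUY_of_lie h1 (ih _ _ (by linarith) h2)) (LUZ_of_semi hα h3.2)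
    · obtain ⟨h1, h2, h3⟩ := h
      rw [ENNReal.add_ne_top] at h3
      have : 1 < α := by
        rw [min_eq_left (not_lt.1 c3)] at c1; linarith
      exact continuous_of_LU (LUY_of_semi hϑ hα h3.1)
        (fun i => LUZ_of_lie i (h1 i) (ih _ _ (by linarith) (h2 i)))
    · obtain ⟨h1, h2, h3, h4, -⟩ := h
      have := not_le.1 c2
      have := le_max_left 1 ϑ
      have := le_max_right 1 ϑ
      exact continuous_of_LU (LUY_of_lie h1 (ih _ _ (by linarith) h2))
        (fun i => LUZ_of_lie i (h3 i) (ih _ _ (by linarith) (h4 i)))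

lemma IsHolder.continuous' {ϑ : ℝ} (hϑ : 0 < ϑ) {α : ℝ} (hα : 0 < α) {u : Pt d → ℝ}
    (h : IsHolder ϑ α u) : Continuous u := mem_continuous hϑ _ _ _ hα h

/-! ### Subtraction -/

lemma semi_sub (φ : ℝ → Pt d → Pt d) (p : ℝ) (f g : Pt d → ℝ) :
    (⨆ (z : Pt d) (τ : ℝ) (_ : τ ≠ 0),
      ENNReal.ofReal (|(f - g) (φ τ z) - (f - g) z| / |τ| ^ p)) ≤
    (⨆ (z : Pt d) (τ : ℝ) (_ : τ ≠ 0), ENNReal.ofReal (|f (φ τ z) - f z| / |τ| ^ p)) +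
    (⨆ (z : Pt d) (τ : ℝ) (_ : τ ≠ 0), ENNReal.ofReal (|g (φ τ z) - g z| / |τ| ^ p)) := by
  refine iSup_le fun z => iSup_le fun τ => iSup_le fun hτ => ?_
  have hp : 0 ≤ |τ| ^ p := Real.rpow_nonneg (abs_nonneg τ) p
  have h1 : |(f - g) (φ τ z) - (f - g) z| / |τ| ^ p
      ≤ |f (φ τ z) - f z| / |τ| ^ p + |g (φ τ z) - g z| / |τ| ^ p := by
    rw [← add_div]
    refine div_le_div_of_nonneg_right ?_ hp
    have : (f - g) (φ τ z) - (f - g) z = (f (φ τ z) - f z) - (g (φ τ z) - g z) := by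
      simp only [Pi.sub_apply]; ring
    rw [this]
    exact abs_sub _ _
  refine (ENNReal.ofReal_le_ofReal h1).trans (ENNReal.ofReal_add_le.trans (add_le_add ?_ ?_))
  · exact le_iSup_of_le z (le_iSup_of_le τ (le_iSup_of_le hτ le_rfl))
  · exact le_iSup_of_le z (le_iSup_of_le τ (le_iSup_of_le hτ le_rfl))

lemma semiY_sub (ϑ α : ℝ) (f g : Pt d → ℝ) :
    semiY ϑ α (f - g) ≤ semiY ϑ α f + semiY ϑ α g := semi_sub flowY _ f g

lemma semiZ_sub (i : Fin d) (α : ℝ) (f g : Pt d → ℝ) :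
    semiZ i α (f - g) ≤ semiZ i α f + semiZ i α g := semi_sub _ _ f g

lemma sum_sub_le {A B C : Fin d → ℝ≥0∞} (h : ∀ i, A i ≤ B i + C i) :
    ∑ i, A i ≤ ∑ i, B i + ∑ i, C i := by
  rw [← Finset.sum_add_distrib]
  exact Finset.sum_le_sum fun i _ => h i

lemma add_sub_le {a b a₁ b₁ a₂ b₂ : ℝ≥0∞} (h1 : a ≤ a₁ + a₂) (h2 : b ≤ b₁ + b₂) :
    a + b ≤ (a₁ + b₁) + (a₂ + b₂) := by
  rw [add_add_add_comm]
  exact add_le_add h1 h2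

lemma hasLie_sub {φ : ℝ → Pt d → Pt d} {f g : Pt d → ℝ} (hf : ∀ z, HasLieAt φ f z)
    (hg : ∀ z, HasLieAt φ g z) : ∀ z, HasLieAt φ (f - g) z := fun z => (hf z).sub (hg z)

lemma lieY_sub {f g : Pt d → ℝ} (hf : ∀ z, HasLieAt flowY f z) (hg : ∀ z, HasLieAt flowY g z) :
    lieY (f - g) = lieY f - lieY g := funext fun z => deriv_fun_sub (hf z) (hg z)

lemma dv_sub {i : Fin d} {f g : Pt d → ℝ}
    (hf : ∀ z, HasLieAt (flowZ (EuclideanSpace.single i 1)) f z)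
    (hg : ∀ z, HasLieAt (flowZ (EuclideanSpace.single i 1)) g z) :
    dv i (f - g) = dv i f - dv i g := funext fun z => deriv_fun_sub (hf z) (hg z)

lemma mem_sub (ϑ : ℝ) : ∀ (n : ℕ) (α : ℝ) (f g : Pt d → ℝ), memAux ϑ n α f → memAux ϑ n α g →
    memAux ϑ n α (f - g) ∧ hNormAux ϑ n α (f - g) ≤ hNormAux ϑ n α f + hNormAux ϑ n α g := by
  intro n
  induction n with
  | zero =>
    intro α f g hf hg
    have hle : hNormAux ϑ 0 α (f - g) ≤ hNormAux ϑ 0 α f + hNormAux ϑ 0 α g := by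
      simp only [hNormAux]
      exact add_sub_le (semiY_sub ϑ α f g) (sum_sub_le fun i => semiZ_sub i α f g)
    refine ⟨?_, hle⟩
    rw [memAux] at hf hg ⊢
    exact ne_top_of_le_ne_top (ENNReal.add_ne_top.2 ⟨hf, hg⟩) hle
  | succ n ih =>
    intro α f g hf hg
    have tf := mem_ne_top _ _ _ _ hf
    have tg := mem_ne_top _ _ _ _ hg
    have fin : ∀ {X : ℝ≥0∞}, X ≤ hNormAux ϑ (n + 1) α f + hNormAux ϑ (n + 1) α g → X ≠ ⊤ :=
      fun hX => ne_top_of_le_ne_top (ENNReal.add_ne_top.2 ⟨tf, tg⟩) hX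
    suffices hs : (hNormAux ϑ (n + 1) α (f - g) ≤
        hNormAux ϑ (n + 1) α f + hNormAux ϑ (n + 1) α g) ∧
        (hNormAux ϑ (n + 1) α (f - g) ≠ ⊤ → memAux ϑ (n + 1) α (f - g)) from
      ⟨hs.2 (fin hs.1), hs.1⟩
    clear fin tf tg
    rw [mem_succ] at hf hg ⊢
    split_ifs at hf hg ⊢ with c1 c2 c3
    · refine ⟨?_, id⟩
      simp only [hN_succ, if_pos c1]
      exact add_sub_le (semiY_sub ϑ α f g) (sum_sub_le fun i => semiZ_sub i α f g)
    · obtain ⟨f1, f2, -⟩ := hf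
      obtain ⟨g1, g2, -⟩ := hg
      have e := lieY_sub f1 g1
      have := ih _ _ _ f2 g2
      refine ⟨?_, fun h => ⟨hasLie_sub f1 g1, e ▸ this.1, h⟩⟩
      simp only [hN_succ, if_neg c1, if_pos c2, if_pos c3]
      rw [e]
      exact add_sub_le this.2 (sum_sub_le fun i => semiZ_sub i α f g)
    · obtain ⟨f1, f2, -⟩ := hf
      obtain ⟨g1, g2, -⟩ := hg
      have e := fun i => dv_sub (f1 i) (g1 i)
      have := fun i => ih _ _ _ (f2 i) (g2 i)
      refine ⟨?_, fun h => ⟨fun i => hasLie_sub (f1 i) (g1 i), fun i => e i ▸ (this i).1, h⟩⟩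
      simp only [hN_succ, if_neg c1, if_pos c2, if_neg c3, e]
      exact add_sub_le (semiY_sub ϑ α f g) (sum_sub_le fun i => (this i).2)
    · obtain ⟨f1, f2, f3, f4, -⟩ := hf
      obtain ⟨g1, g2, g3, g4, -⟩ := hg
      have e := lieY_sub f1 g1
      have t := ih _ _ _ f2 g2
      have e' := fun i => dv_sub (f3 i) (g3 i)
      have t' := fun i => ih _ _ _ (f4 i) (g4 i)
      refine ⟨?_, fun h => ⟨hasLie_sub f1 g1, e ▸ t.1, fun i => hasLie_sub (f3 i) (g3 i),
        fun i => e' i ▸ (t' i).1, h⟩⟩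
      simp only [hN_succ, if_neg c1, if_neg c2, e, e']
      exact add_sub_le t.2 (sum_sub_le fun i => (t' i).2)

lemma IsHolder.sub' {ϑ α : ℝ} {f g : Pt d → ℝ} (hf : IsHolder ϑ α f) (hg : IsHolder ϑ α g) :
    IsHolder ϑ α (f - g) ∧ holderNorm ϑ α (f - g) ≤ holderNorm ϑ α f + holderNorm ϑ α g :=
  mem_sub ϑ _ α f g hf hg

/-! ### One derivative -/

lemma holder_fuel {ϑ : ℝ} (hϑ : 0 < ϑ) (α : ℝ) : ∃ n : ℕ, ∀ u : Pt d → ℝ,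
    (holderNorm ϑ α u = hNormAux ϑ (n + 1) α u ∧ (IsHolder ϑ α u ↔ memAux ϑ (n + 1) α u)) ∧
    (holderNorm ϑ (α - ϑ) u = hNormAux ϑ n (α - ϑ) u ∧
      (IsHolder ϑ (α - ϑ) u ↔ memAux ϑ n (α - ϑ) u)) ∧
    (holderNorm ϑ (α - 1) u = hNormAux ϑ n (α - 1) u ∧
      (IsHolder ϑ (α - 1) u ↔ memAux ϑ n (α - 1) u)) := by
  have hμ : 0 < min 1 ϑ := lt_min one_pos hϑ
  have h := fuel_ok hϑ α
  refine ⟨fuel ϑ α, fun u => ⟨holder_eq hϑ u ?_, holder_eq hϑ u ?_, holder_eq hϑ u ?_⟩⟩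
  · push_cast; linarith
  · linarith
  · linarith

lemma step_Y {ϑ : ℝ} (hϑ : 0 < ϑ) {α : ℝ} {u : Pt d → ℝ} (hα : ϑ < α) (h : IsHolder ϑ α u) :
    (∀ z, HasLieAt flowY u z) ∧ IsHolder ϑ (α - ϑ) (lieY u) ∧
      holderNorm ϑ (α - ϑ) (lieY u) ≤ holderNorm ϑ α u := by
  obtain ⟨n, hn⟩ := holder_fuel (d := d) hϑ α
  rw [(hn u).1.2, mem_succ] at h
  rw [(hn u).1.1, (hn (lieY u)).2.1.1, (hn (lieY u)).2.1.2, hN_succ]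
  have c1 : ¬ α ≤ min 1 ϑ := fun hc => by have := min_le_right 1 ϑ; linarith
  rw [if_neg c1] at h ⊢
  split_ifs at h ⊢ with c2 c3
  · exact ⟨h.1, h.2.1, le_self_add⟩
  · rw [max_eq_right (not_lt.1 c3)] at c2; linarith
  · exact ⟨h.1, h.2.1, le_self_add⟩

lemma step_Z {ϑ : ℝ} (hϑ : 0 < ϑ) {α : ℝ} {u : Pt d → ℝ} (hα : 1 < α) (h : IsHolder ϑ α u)
    (i : Fin d) : (∀ z, HasLieAt (flowZ (EuclideanSpace.single i 1)) u z) ∧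
      IsHolder ϑ (α - 1) (dv i u) ∧ holderNorm ϑ (α - 1) (dv i u) ≤ holderNorm ϑ α u := by
  obtain ⟨n, hn⟩ := holder_fuel (d := d) hϑ α
  rw [(hn u).1.2, mem_succ] at h
  rw [(hn u).1.1, (hn (dv i u)).2.2.1, (hn (dv i u)).2.2.2, hN_succ]
  have c1 : ¬ α ≤ min 1 ϑ := fun hc => by have := min_le_left 1 ϑ; linarith
  have hs : hNormAux ϑ n (α - 1) (dv i u) ≤ ∑ i, hNormAux ϑ n (α - 1) (dv i u) :=
    Finset.single_le_sum (f := fun i => hNormAux ϑ n (α - 1) (dv i u))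
      (fun _ _ => zero_le) (Finset.mem_univ i)
  rw [if_neg c1] at h ⊢
  split_ifs at h ⊢ with c2 c3
  · rw [max_eq_left c3.le] at c2; linarith
  · exact ⟨h.1 i, h.2.1 i, hs.trans le_add_self⟩
  · exact ⟨h.2.2.1 i, h.2.2.2.1 i, hs.trans le_add_self⟩

lemma norm_YZ_le {ϑ : ℝ} (hϑ : 0 < ϑ) {α : ℝ} {u : Pt d → ℝ} (h1 : 1 < α) (h2 : ϑ < α)
    (i : Fin d) :
    holderNorm ϑ (α - ϑ) (lieY u) + holderNorm ϑ (α - 1) (dv i u) ≤ holderNorm ϑ α u := by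
  obtain ⟨n, hn⟩ := holder_fuel (d := d) hϑ α
  rw [(hn u).1.1, (hn (dv i u)).2.2.1, (hn (lieY u)).2.1.1, hN_succ]
  have c1 : ¬ α ≤ min 1 ϑ := fun hc => by have := min_le_left 1 ϑ; linarith
  have c2 : ¬ α ≤ max 1 ϑ := not_le.2 (max_lt h1 h2)
  rw [if_neg c1, if_neg c2]
  exact add_le_add le_rfl (Finset.single_le_sum (f := fun i => hNormAux ϑ n (α - 1) (dv i u))
      (fun _ _ => zero_le) (Finset.mem_univ i))

lemma step_X {ϑ : ℝ} (hϑ : 0 < ϑ) {α : ℝ} {u : Pt d → ℝ} (hα : 1 + ϑ < α) (h : IsHolder ϑ α u)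
    (i : Fin d) : (∀ z, HasLieAt (flowX (EuclideanSpace.single i 1)) u z) ∧
      IsHolder ϑ (α - (1 + ϑ)) (dx i u) ∧
      holderNorm ϑ (α - (1 + ϑ)) (dx i u) ≤ holderNorm ϑ α u := by
  obtain ⟨yu, hg, -⟩ := step_Y hϑ (by linarith) h
  obtain ⟨zu, hf, -⟩ := step_Z hϑ (by linarith) h i
  obtain ⟨yf, ha, na⟩ := step_Y hϑ (by linarith) hf
  obtain ⟨zg, hb, nb⟩ := step_Z hϑ (by linarith) hg i
  have cu := h.continuous' hϑ (by linarith)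
  have cg := hg.continuous' hϑ (by linarith)
  have cf := hf.continuous' hϑ (by linarith)
  have ca := ha.continuous' hϑ (by linarith)
  have cb := hb.continuous' hϑ (by linarith)
  set e : EuclideanSpace ℝ (Fin d) := EuclideanSpace.single i 1 with he
  have key : ∀ z, HasDerivAt (fun s => u (flowX e s z))
      ((dv i (lieY u) - lieY (dv i u)) z) 0 := by
    intro z
    let Φ : ℝ → ℝ → ℝ → Pt d := fun τ s η => (z.1 + τ, z.2.1 + τ • z.2.2 + s • e, z.2.2 + η • e)
    have cΦ : Continuous (fun p : ℝ × ℝ × ℝ => Φ p.1 p.2.1 p.2.2) := by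
      simp only [Φ]; fun_prop
    have ZΦ : ∀ τ s η, Φ τ s η = flowZ e η (Φ τ s 0) := fun τ s η => by simp [Φ, flowZ]
    have YΦ : ∀ τ s η h, Φ (τ + h) (s + h * η) η = flowY h (Φ τ s η) := fun τ s η h => by
      simp only [Φ, flowY]
      refine Prod.ext ?_ (Prod.ext ?_ rfl)
      · simp only; ring
      · simp only; module
    have core := commutator_core (fun τ s η => u (Φ τ s η)) (fun τ s η => dv i u (Φ τ s η))
      (fun τ s η => lieY u (Φ τ s η)) (fun τ s η => lieY (dv i u) (Φ τ s η))
      (fun τ s η => dv i (lieY u) (Φ τ s η))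
      (cu.comp cΦ) (cf.comp cΦ) (cg.comp cΦ) (ca.comp cΦ) (cb.comp cΦ)
      (fun τ s η => by
        have := hasDerivAt_flowZ i u zu (Φ τ s 0) η
        simpa only [← he, ← ZΦ τ s] using this)
      (fun τ s η => by
        have := hasDerivAt_flowZ i _ zg (Φ τ s 0) η
        simpa only [← he, ← ZΦ τ s] using this)
      (fun τ s η h => by
        simp only [YΦ τ s η]; exact hasDerivAt_flowY u yu (Φ τ s η) h)
      (fun τ s η h => by
        simp only [YΦ τ s η]; exact hasDerivAt_flowY _ yf (Φ τ s η) h)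
    have XΦ : ∀ s, Φ 0 s 0 = flowX e s z := fun s => by simp [Φ, flowX]
    simp only [XΦ] at core
    have X0 : flowX e 0 z = z := by simp [flowX]
    have cX : Continuous (fun s => flowX e s z) := by unfold flowX; fun_prop
    have ci : Continuous (fun s => dv i (lieY u) (flowX e s z) - lieY (dv i u) (flowX e s z)) :=
      (cb.comp cX).sub (ca.comp cX)
    have eq : (fun s => u (flowX e s z)) = fun ε => u (flowX e 0 z) +
        ∫ s in (0:ℝ)..ε, (dv i (lieY u) (flowX e s z) - lieY (dv i u) (flowX e s z)) :=
      funext fun ε => by rw [← core ε]; ring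
    rw [eq]
    have D := (intervalIntegral.integral_hasDerivAt_right (a := 0) (b := 0)
      (ci.intervalIntegrable _ _)
      (ci.stronglyMeasurableAtFilter _ _) ci.continuousAt).const_add (u (flowX e 0 z))
    simpa only [X0, Pi.sub_apply] using D
  have edx : dx i u = dv i (lieY u) - lieY (dv i u) := funext fun z => (key z).deriv
  have ex1 : α - ϑ - 1 = α - (1 + ϑ) := by ring
  have ex2 : α - 1 - ϑ = α - (1 + ϑ) := by ring
  rw [ex1] at hb nb
  rw [ex2] at ha na
  have S := hb.sub' ha
  rw [edx]
  refine ⟨fun z => (key z).differentiableAt, S.1, S.2.trans ((add_le_add nb na).trans ?_)⟩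
  exact norm_YZ_le hϑ (by linarith) (by linarith) i

/-! ### Iteration -/

lemma iter_list {ϑ c : ℝ} (φ : Fin d → ℝ → Pt d → Pt d)
    (D : Fin d → (Pt d → ℝ) → Pt d → ℝ)
    (step : ∀ (α : ℝ) (u : Pt d → ℝ), c < α → IsHolder ϑ α u → ∀ i,
      (∀ z, HasLieAt (φ i) u z) ∧ IsHolder ϑ (α - c) (D i u) ∧
        holderNorm ϑ (α - c) (D i u) ≤ holderNorm ϑ α u)
    (hc : 0 < c) (α : ℝ) (u : Pt d → ℝ) (h : IsHolder ϑ α u) : ∀ l : List (Fin d),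
    c * (l.length : ℝ) < α → ExistsDList φ D l u ∧ IsHolder ϑ (α - c * l.length) (derivList D l u) ∧
      holderNorm ϑ (α - c * l.length) (derivList D l u) ≤ holderNorm ϑ α u := by
  intro l
  induction l with
  | nil => intro _; simpa [ExistsDList, derivList] using h
  | cons i l ih =>
    intro hl
    rw [List.length_cons] at hl ⊢
    push_cast at hl ⊢
    obtain ⟨h1, h2, h3⟩ := ih (by linarith)
    obtain ⟨s1, s2, s3⟩ := step _ _ (by linarith) h2 i
    have e : α - c * ((l.length : ℝ) + 1) = α - c * l.length - c := by ring
    rw [e]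
    exact ⟨⟨h1, s1⟩, s2, s3.trans h3⟩

lemma idxList_length (β : Fin d → ℕ) : (idxList β).length = ∑ i, β i := by
  simp [idxList, List.length_flatten, List.map_ofFn, List.sum_ofFn]

lemma iter_Y {ϑ : ℝ} (hϑ : 0 < ϑ) (α : ℝ) (u : Pt d → ℝ) (h : IsHolder ϑ α u) : ∀ k : ℕ,
    ϑ * (k : ℝ) < α → ExistsLieYIter u k ∧ IsHolder ϑ (α - ϑ * k) (lieY^[k] u) ∧
      holderNorm ϑ (α - ϑ * k) (lieY^[k] u) ≤ holderNorm ϑ α u := by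
  intro k
  induction k with
  | zero => intro _; simpa [ExistsLieYIter] using h
  | succ k ih =>
    intro hk
    push_cast at hk ⊢
    obtain ⟨h1, h2, h3⟩ := ih (by linarith)
    obtain ⟨s1, s2, s3⟩ := step_Y hϑ (by linarith) h2
    have e : α - ϑ * ((k : ℝ) + 1) = α - ϑ * k - ϑ := by ring
    rw [e, Function.iterate_succ_apply']
    exact ⟨⟨h1, s1⟩, s2, s3.trans h3⟩

/-- Intrinsic Hölder space characterization: for `u ∈ C^α` and `k, γ, β` with
`ϑ k + (1+ϑ)|γ| + |β| < α`, the derivative `Y^k ∂_v^β ∂_x^γ u` exists at every point,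
belongs to `C^{α − ϑk − (1+ϑ)|γ| − |β|}`, and its seminorm is bounded by `‖u‖_{C^α}`. -/
theorem intrinsic_holder_characterization (d : ℕ) (hd : 1 ≤ d) (ϑ : ℝ) (hϑ : 0 < ϑ)
    (α : ℝ) (hα : 0 < α) (u : Pt d → ℝ) (hu : IsHolder ϑ α u)
    (k : ℕ) (γ β : Fin d → ℕ)
    (hlt : ϑ * (k : ℝ) + (1 + ϑ) * ((∑ i, γ i : ℕ) : ℝ) + ((∑ i, β i : ℕ) : ℝ) < α) :
    ExistsDxPow γ u ∧
    ExistsDvPow β (dxPow γ u) ∧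
    ExistsLieYIter (dvPow β (dxPow γ u)) k ∧
    IsHolder ϑ (α - ϑ * (k : ℝ) - (1 + ϑ) * ((∑ i, γ i : ℕ) : ℝ) - ((∑ i, β i : ℕ) : ℝ))
      (lieY^[k] (dvPow β (dxPow γ u))) ∧
    holderNorm ϑ (α - ϑ * (k : ℝ) - (1 + ϑ) * ((∑ i, γ i : ℕ) : ℝ) - ((∑ i, β i : ℕ) : ℝ))
      (lieY^[k] (dvPow β (dxPow γ u))) ≤ holderNorm ϑ α u := by
  have kn : 0 ≤ ϑ * (k : ℝ) := mul_nonneg hϑ.le (Nat.cast_nonneg k)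
  have bn : (0:ℝ) ≤ ((∑ i, β i : ℕ) : ℝ) := Nat.cast_nonneg _
  obtain ⟨x1, x2, x3⟩ := iter_list (ϑ := ϑ) (c := 1 + ϑ)
    (fun i => flowX (EuclideanSpace.single i 1)) dx
    (fun α u hα hu i => step_X hϑ hα hu i) (by linarith) α u hu (idxList γ)
    (by rw [idxList_length]; linarith)
  rw [idxList_length] at x2 x3
  obtain ⟨v1, v2, v3⟩ := iter_list (ϑ := ϑ) (c := 1)
    (fun i => flowZ (EuclideanSpace.single i 1)) dv
    (fun α u hα hu i => step_Z hϑ hα hu i) one_pos _ _ x2 (idxList β)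
    (by rw [idxList_length]; linarith)
  rw [idxList_length] at v2 v3
  obtain ⟨y1, y2, y3⟩ := iter_Y hϑ _ _ v2 k (by linarith)
  have e : α - ϑ * (k : ℝ) - (1 + ϑ) * ((∑ i, γ i : ℕ) : ℝ) - ((∑ i, β i : ℕ) : ℝ)
    = α - (1 + ϑ) * ((∑ i, γ i : ℕ) : ℝ) - 1 * ((∑ i, β i : ℕ) : ℝ) - ϑ * (k : ℝ) := by ring
  rw [e]
  exact ⟨x1, v1, y1, y2, y3.trans (v3.trans x3)⟩

end
end

section
/- Intrinsic Taylor formula (second part of the main theorem): for any α>0 there exists a constant c>0, depending only on d, ϑ and α, such that for any u∈C^α, |u(z) − T_α u(z₀;z)| ≤ c · ‖u‖_{C^α} · ‖z₀⁻¹∘z‖^α for all z, z₀ ∈ ℝ×ℝ^{2d}. -/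
noncomputable section
open scoped BigOperators ENNReal

variable {d : ℕ}

/-- The Galilean group law `z₁ ∘ z₂ = (t₁ + t₂, x₁ + x₂ + t₂ v₁, v₁ + v₂)`. -/
def gmul {d : ℕ} (z₁ z₂ : Pt d) : Pt d :=
  (z₁.1 + z₂.1, z₁.2.1 + z₂.2.1 + z₂.1 • z₁.2.2, z₁.2.2 + z₂.2.2)

/-- The group inverse `(t, x, v)⁻¹ = (−t, t v − x, −v)`. -/
def ginv {d : ℕ} (z : Pt d) : Pt d := (-z.1, z.1 • z.2.2 - z.2.1, -z.2.2)

/-- The homogeneous norm `‖(t,x,v)‖ = |t|^(1/ϑ) + |x|^(1/(ϑ+1)) + |v|`. -/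
def hnorm (ϑ : ℝ) {d : ℕ} (z : Pt d) : ℝ :=
  |z.1| ^ (1 / ϑ) + ‖z.2.1‖ ^ (1 / (ϑ + 1)) + ‖z.2.2‖

open Classical in
/-- The index set `{(k, γ, β) : ϑ k + (1+ϑ)|γ| + |β| < α}` of the intrinsic Taylor polynomial. -/
def taylorIdx (ϑ α : ℝ) (d : ℕ) : Finset (ℕ × (Fin d → ℕ) × (Fin d → ℕ)) :=
  ((Finset.range (Nat.ceil (α / ϑ) + Nat.ceil α + 1)) ×ˢ
    ((Fintype.piFinset fun _ => Finset.range (Nat.ceil α + 1)) ×ˢ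
      (Fintype.piFinset fun _ => Finset.range (Nat.ceil α + 1)))).filter
    fun p => ϑ * (p.1 : ℝ) + (1 + ϑ) * ((∑ i, p.2.1 i : ℕ) : ℝ) + ((∑ i, p.2.2 i : ℕ) : ℝ) < α

/-- The intrinsic Taylor polynomial `T_α u(z₀; z)`. -/
def taylorPoly (ϑ α : ℝ) (u : Pt d → ℝ) (z₀ z : Pt d) : ℝ :=
  ∑ p ∈ taylorIdx ϑ α d,
    (lieY^[p.1] (dvPow p.2.2 (dxPow p.2.1 u)) z₀ /
        ((p.1.factorial : ℝ) * (∏ i, ((p.2.1 i).factorial : ℝ)) *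
          (∏ i, ((p.2.2 i).factorial : ℝ)))) *
      ((z.1 - z₀.1) ^ p.1 *
        (∏ i, (z.2.1 i - z₀.2.1 i - (z.1 - z₀.1) * z₀.2.2 i) ^ p.2.1 i) *
        (∏ i, (z.2.2 i - z₀.2.2 i) ^ p.2.2 i))

namespace ITF
open MvPolynomial

/-- Index type of the coordinates `t`, `x_i`, `v_i`. -/
abbrev Sg (d : ℕ) := Unit ⊕ (Fin d ⊕ Fin d)

abbrev st : Sg d := Sum.inl ()
abbrev sx (i : Fin d) : Sg d := Sum.inr (Sum.inl i)
abbrev sv (i : Fin d) : Sg d := Sum.inr (Sum.inr i)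

def co (z : Pt d) : Sg d → ℝ
  | Sum.inl _ => z.1
  | Sum.inr (Sum.inl i) => z.2.1 i
  | Sum.inr (Sum.inr i) => z.2.2 i

def wg (ϑ : ℝ) : Sg d → ℝ
  | Sum.inl _ => ϑ
  | Sum.inr (Sum.inl _) => 1 + ϑ
  | Sum.inr (Sum.inr _) => 1

/-- Weights counting the degree in `x`. -/
def wx : Sg d → ℝ
  | Sum.inl _ => 0
  | Sum.inr (Sum.inl _) => 1
  | Sum.inr (Sum.inr _) => 0

inductive Fld (d : ℕ) where
  | Y : Fld d
  | Z : Fin d → Fld d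
  | X : Fin d → Fld d

def fl : Fld d → ℝ → Pt d → Pt d
  | Fld.Y => flowY
  | Fld.Z i => flowZ (EuclideanSpace.single i 1)
  | Fld.X i => flowX (EuclideanSpace.single i 1)

def fw (ϑ : ℝ) : Fld d → ℝ
  | Fld.Y => ϑ
  | Fld.Z _ => 1
  | Fld.X _ => 1 + ϑ

abbrev Pol (d : ℕ) := MvPolynomial (Sg d) ℝ

def DP : Fld d → Pol d → Pol d
  | Fld.Y, P => pderiv st P + ∑ i, X (sv i) * pderiv (sx i) P
  | Fld.Z i, P => pderiv (sv i) P
  | Fld.X i, P => pderiv (sx i) P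

def wt (w : Sg d → ℝ) (m : Sg d →₀ ℕ) : ℝ := ∑ s, w s * (m s : ℝ)

def WLT (w : Sg d → ℝ) (c : ℝ) (P : Pol d) : Prop := ∀ m, coeff m P ≠ 0 → wt w m < c

lemma wt_add (w : Sg d → ℝ) (m n : Sg d →₀ ℕ) : wt w (m + n) = wt w m + wt w n := by
  simp [wt, mul_add, Finset.sum_add_distrib]

lemma wt_single (w : Sg d → ℝ) (s : Sg d) (n : ℕ) : wt w (Finsupp.single s n) = w s * n := by
  classical
  unfold wt
  rw [Finset.sum_eq_single s]
  · simp
  · intro b _ hb; simp [Finsupp.single_apply, Ne.symm hb]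
  · simp

lemma WLT.zero (w : Sg d → ℝ) (c : ℝ) : WLT w c 0 := by intro m hm; simp at hm

lemma WLT.add {w : Sg d → ℝ} {c : ℝ} {P Q : Pol d} (hP : WLT w c P) (hQ : WLT w c Q) :
    WLT w c (P + Q) := by
  intro m hm
  by_cases h : coeff m P = 0
  · exact hQ m (by simpa [h] using hm)
  · exact hP m h

lemma WLT.neg {w : Sg d → ℝ} {c : ℝ} {P : Pol d} (hP : WLT w c P) : WLT w c (-P) := by
  intro m hm
  exact hP m (by simpa using hm)

lemma WLT.sub {w : Sg d → ℝ} {c : ℝ} {P Q : Pol d} (hP : WLT w c P) (hQ : WLT w c Q) :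
    WLT w c (P - Q) := by
  rw [sub_eq_add_neg]; exact hP.add hQ.neg

lemma WLT.sum {w : Sg d → ℝ} {c : ℝ} {ι : Type*} (S : Finset ι) (P : ι → Pol d)
    (hP : ∀ i ∈ S, WLT w c (P i)) : WLT w c (∑ i ∈ S, P i) := by
  classical
  induction S using Finset.induction_on with
  | empty => simpa using WLT.zero w c
  | insert a S ha ih =>
    rw [Finset.sum_insert ha]
    exact (hP a (by simp)).add (ih fun i hi => hP i (by simp [hi]))

lemma WLT.mono_w {w : Sg d → ℝ} {c c' : ℝ} {P : Pol d} (hP : WLT w c P) (h : c ≤ c') :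
    WLT w c' P := fun m hm => (hP m hm).trans_le h

lemma WLT.monomial {w : Sg d → ℝ} {c : ℝ} {m : Sg d →₀ ℕ} (h : wt w m < c) (a : ℝ) :
    WLT w c (monomial m a) := by
  classical
  intro n hn
  rw [coeff_monomial] at hn
  split_ifs at hn with hh
  · rwa [← hh]
  · exact absurd rfl hn

lemma WLT.pderiv {w : Sg d → ℝ} {c : ℝ} {P : Pol d} (hP : WLT w c P) (s : Sg d) :
    WLT w (c - w s) (pderiv s P) := by
  intro m hm
  rw [coeff_pderiv] at hm
  have := hP _ (left_ne_zero_of_mul hm)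
  rw [wt_add, wt_single] at this
  push_cast at this
  linarith

lemma WLT.X_mul {w : Sg d → ℝ} {c : ℝ} {P : Pol d} (hP : WLT w c P) (s : Sg d) :
    WLT w (c + w s) (X s * P) := by
  classical
  intro m hm
  rw [coeff_X_mul'] at hm
  split_ifs at hm with hh
  · have h1 := hP _ hm
    have h2 : m = (m - Finsupp.single s 1) + Finsupp.single s 1 := by
      rw [tsub_add_cancel_of_le]
      simpa [Nat.one_le_iff_ne_zero] using hh
    rw [h2, wt_add, wt_single]
    push_cast
    linarith
  · exact absurd rfl hm

lemma WLT.DP {ϑ c : ℝ} {P : Pol d} (hP : WLT (wg ϑ) c P) (j : Fld d) :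
    WLT (wg ϑ) (c - fw ϑ j) (DP j P) := by
  cases j with
  | Y =>
    refine (hP.pderiv st).add (WLT.sum _ _ fun i _ => ?_)
    refine ((hP.pderiv (sx i)).X_mul (sv i)).mono_w ?_
    simp only [wg, fw]; linarith
  | Z i => exact hP.pderiv (sv i)
  | X i => exact hP.pderiv (sx i)

lemma exists_anti (s : Sg d) (P : Pol d) : ∃ F : Pol d, pderiv s F = P ∧
    ∀ (w : Sg d → ℝ) (c : ℝ), WLT w c P → WLT w (c + w s) F := by
  classical
  refine ⟨∑ m ∈ P.support, monomial (m + Finsupp.single s 1) (coeff m P / (m s + 1)), ?_, ?_⟩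
  · rw [map_sum]
    conv_rhs => rw [← support_sum_monomial_coeff P]
    refine Finset.sum_congr rfl fun m _ => ?_
    rw [pderiv_monomial]
    have : (m s : ℝ) + 1 ≠ 0 := by positivity
    simp [this]
  · intro w c h
    refine WLT.sum _ _ fun m hm => WLT.monomial ?_ _
    have := h m (by simpa using hm)
    rw [wt_add, wt_single]; push_cast; linarith

lemma DP_add (j : Fld d) (P Q : Pol d) : DP j (P + Q) = DP j P + DP j Q := by
  cases j <;> simp [DP, mul_add, Finset.sum_add_distrib]
  ring

lemma DP_sub (j : Fld d) (P Q : Pol d) : DP j (P - Q) = DP j P - DP j Q := by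
  cases j <;> simp [DP, mul_sub, Finset.sum_sub_distrib]
  ring

lemma exists_antiY (ϑ : ℝ) (c : ℝ) (n : ℕ) : ∀ Q : Pol d, WLT wx n Q → WLT (wg ϑ) c Q →
    ∃ F : Pol d, WLT (wg ϑ) (c + ϑ) F ∧ DP Fld.Y F = Q := by
  induction n with
  | zero =>
    intro Q hx _
    refine ⟨0, WLT.zero _ _, ?_⟩
    have : Q = 0 := by
      ext m
      by_contra h
      have h1 := hx m (by simpa using h)
      have h2 : 0 ≤ wt wx m := Finset.sum_nonneg fun s _ => by
        rcases s with s | s | s <;> simp [wx]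
      simp at h1; linarith
    simp [this, DP]
  | succ n ih =>
    intro Q hx hw
    obtain ⟨F1, h1, h2⟩ := exists_anti (st : Sg d) Q
    have hr : DP Fld.Y F1 = Q + ∑ i, X (sv i) * pderiv (sx i) F1 := by simp [DP, h1]
    obtain ⟨F2, h3, h4⟩ := ih (∑ i, X (sv i) * pderiv (sx i) F1) (by
        refine WLT.sum _ _ fun i _ => ?_
        refine (((h2 _ _ hx).pderiv (sx i)).X_mul (sv i)).mono_w ?_
        simp [wx]) (by
        refine WLT.sum _ _ fun i _ => ?_
        refine (((h2 _ _ hw).pderiv (sx i)).X_mul (sv i)).mono_w ?_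
        simp [wg])
    refine ⟨F1 - F2, (h2 _ _ hw).sub h3, ?_⟩
    rw [DP_sub, hr, h4]; ring

lemma exists_antiD (ϑ : ℝ) (c : ℝ) (j : Fld d) (Q : Pol d) (hQ : WLT (wg ϑ) c Q) :
    ∃ F : Pol d, WLT (wg ϑ) (c + fw ϑ j) F ∧ DP j F = Q := by
  cases j with
  | Y =>
    obtain ⟨n, hn⟩ : ∃ n : ℕ, WLT wx n Q := by
      obtain ⟨n, hn⟩ := exists_nat_gt (∑ m ∈ Q.support, wt wx m)
      refine ⟨n, fun m hm => lt_of_le_of_lt ?_ hn⟩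
      refine Finset.single_le_sum (f := fun m => wt wx m) (fun m _ => ?_) (by simpa using hm)
      exact Finset.sum_nonneg fun s _ => by
        rcases s with s | s | s <;> simp [wx]
    exact exists_antiY ϑ c n Q hn hQ
  | Z i =>
    obtain ⟨F, h1, h2⟩ := exists_anti (sv i) Q
    exact ⟨F, h2 _ _ hQ, h1⟩
  | X i =>
    obtain ⟨F, h1, h2⟩ := exists_anti (sx i) Q
    exact ⟨F, h2 _ _ hQ, h1⟩

/-! Semantics of derivatives. -/

lemma hasDerivAt_eval (c : ℝ → Sg d → ℝ) (c' : Sg d → ℝ) (τ : ℝ)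
    (hc : ∀ s, HasDerivAt (fun r => c r s) (c' s) τ) (P : Pol d) :
    HasDerivAt (fun r => eval (c r) P) (∑ s, c' s * eval (c τ) (pderiv s P)) τ := by
  classical
  induction P using MvPolynomial.induction_on with
  | C a => simpa using hasDerivAt_const τ a
  | add p q hp hq =>
    simp only [map_add, mul_add, Finset.sum_add_distrib]
    exact hp.add hq
  | mul_X p s hp =>
    have := hp.mul (hc s)
    simp only [map_mul, eval_X]
    refine HasDerivAt.congr_deriv this ?_
    simp only [Derivation.leibniz, map_add, smul_eq_mul, map_mul, eval_X, pderiv_X, mul_add,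
      Finset.sum_add_distrib]
    rw [add_comm, Finset.sum_mul]
    congr 1
    · symm
      rw [Finset.sum_eq_single s]
      · simp; ring
      · intro b _ hb; simp [hb.symm]
      · simp
    · exact Finset.sum_congr rfl fun x _ => by ring

lemma co_flY (τ : ℝ) (z : Pt d) (s : Sg d) : co (fl Fld.Y τ z) s =
    co z s + τ * Sum.elim (fun _ => 1) (Sum.elim (fun i => z.2.2 i) (fun _ => 0)) s := by
  rcases s with s | s | s <;> simp [co, fl, flowY]

lemma co_flZ (j : Fin d) (τ : ℝ) (z : Pt d) (s : Sg d) : co (fl (Fld.Z j) τ z) s =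
    co z s + τ * (Pi.single (sv j) 1 : Sg d → ℝ) s := by
  rcases s with s | s | s <;> simp [co, fl, flowZ, Pi.single_apply]

lemma co_flX (j : Fin d) (τ : ℝ) (z : Pt d) (s : Sg d) : co (fl (Fld.X j) τ z) s =
    co z s + τ * (Pi.single (sx j) 1 : Sg d → ℝ) s := by
  rcases s with s | s | s <;> simp [co, fl, flowX, Pi.single_apply]

lemma hasDerivAt_fl (j : Fld d) (P : Pol d) (z : Pt d) (τ : ℝ) :
    HasDerivAt (fun r => eval (co (fl j r z)) P) (eval (co (fl j τ z)) (DP j P)) τ := by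
  cases j with
  | Y =>
    convert hasDerivAt_eval (fun r => co (fl Fld.Y r z))
      (Sum.elim (fun _ => 1) (Sum.elim (fun i => z.2.2 i) (fun _ => 0))) τ ?_ P using 1
    · simp [DP, co, fl, flowY]
    · intro s
      simp only [co_flY]
      simpa using ((hasDerivAt_id τ).mul_const _).const_add (co z s)
  | Z i =>
    convert hasDerivAt_eval (fun r => co (fl (Fld.Z i) r z)) (Pi.single (sv i) 1) τ ?_ P using 1
    · simp [DP, Pi.single_apply]
    · intro s
      simp only [co_flZ]
      simpa using ((hasDerivAt_id τ).mul_const _).const_add (co z s)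
  | X i =>
    convert hasDerivAt_eval (fun r => co (fl (Fld.X i) r z)) (Pi.single (sx i) 1) τ ?_ P using 1
    · simp [DP, Pi.single_apply]
    · intro s
      simp only [co_flX]
      simpa using ((hasDerivAt_id τ).mul_const _).const_add (co z s)

lemma fl_affine (j : Fld d) (z : Pt d) : ∃ b : Sg d → ℝ, ∀ τ s,
    co (fl j τ z) s = co z s + τ * b s := by
  cases j with
  | Y => exact ⟨_, fun τ s => co_flY τ z s⟩
  | Z i => exact ⟨_, fun τ s => co_flZ i τ z s⟩
  | X i => exact ⟨_, fun τ s => co_flX i τ z s⟩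

lemma totalDegree_le {ϑ : ℝ} (hϑ : 0 < ϑ) {c : ℝ} {P : Pol d} (hP : WLT (wg ϑ) c P) :
    P.totalDegree ≤ ⌈c / min 1 ϑ⌉₊ := by
  rw [totalDegree]
  refine Finset.sup_le fun m hm => ?_
  have h1 := hP m (by simpa using hm)
  have hmin : 0 < min 1 ϑ := lt_min one_pos hϑ
  have h2 : min 1 ϑ * (m.sum fun _ e => e : ℕ) ≤ wt (wg ϑ) m := by
    rw [Finsupp.sum_fintype _ _ (by simp)]
    unfold wt
    push_cast
    rw [Finset.mul_sum]
    refine Finset.sum_le_sum fun s _ => ?_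
    refine mul_le_mul_of_nonneg_right ?_ (by positivity)
    rcases s with s | s | s <;> simp [wg]
  have h3 : ((m.sum fun _ e => e : ℕ) : ℝ) ≤ c / min 1 ϑ := by
    rw [le_div_iff₀ hmin]; linarith
  exact_mod_cast h3.trans (Nat.le_ceil _)

lemma exists_poly_fl {ϑ : ℝ} (hϑ : 0 < ϑ) {c : ℝ} {P : Pol d} (hP : WLT (wg ϑ) c P) (j : Fld d)
    (z : Pt d) : ∃ p : Polynomial ℝ, p.natDegree ≤ ⌈c / min 1 ϑ⌉₊ ∧
      ∀ τ, eval (co (fl j τ z)) P = p.eval τ := by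
  obtain ⟨b, hb⟩ := fl_affine j z
  refine ⟨aeval (fun s => Polynomial.C (co z s) + Polynomial.X * Polynomial.C (b s)) P, ?_, ?_⟩
  · refine (MvPolynomial.aeval_natDegree_le P (totalDegree_le hϑ hP) _ (n := 1) ?_).trans (by simp)
    intro s
    compute_degree
  · intro τ
    have h : ∀ Q : Pol d, eval (co (fl j τ z)) Q = Polynomial.eval τ
        (aeval (fun s => Polynomial.C (co z s) + Polynomial.X * Polynomial.C (b s)) Q) := by
      intro Q
      induction Q using MvPolynomial.induction_on with
      | C a => simp
      | add p q hp hq => simp [hp, hq]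
      | mul_X p s hp =>
        rw [map_mul, map_mul, hp, Polynomial.eval_mul]
        simp [hb]
        left; ring
    exact h P

end ITF

namespace ITF
open MvPolynomial Filter Topology

def InBox (ϑ R : ℝ) (w : Pt d) : Prop := |w.1| ≤ R ^ ϑ ∧ ‖w.2.1‖ ≤ R ^ (1 + ϑ) ∧ ‖w.2.2‖ ≤ R

def kap (ϑ : ℝ) : ℝ := max 2 (2 ^ (1 / ϑ))

lemma kap_ge (ϑ : ℝ) : 2 ≤ kap ϑ := le_max_left _ _

lemma kap_pow {ϑ : ℝ} (hϑ : 0 < ϑ) : 2 ≤ kap ϑ ^ ϑ := by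
  calc (2 : ℝ) = ((2 : ℝ) ^ (1 / ϑ)) ^ ϑ := by
        rw [← Real.rpow_mul (by norm_num)]; field_simp; simp
    _ ≤ kap ϑ ^ ϑ := by
        refine Real.rpow_le_rpow (by positivity) (le_max_right _ _) hϑ.le

lemma kap_pow' {ϑ : ℝ} (hϑ : 0 < ϑ) : 2 ≤ kap ϑ ^ (1 + ϑ) := by
  refine (kap_pow hϑ).trans (Real.rpow_le_rpow_of_exponent_le ?_ (by linarith))
  linarith [kap_ge ϑ]

lemma fw_pos {ϑ : ℝ} (hϑ : 0 < ϑ) (j : Fld d) : 0 < fw ϑ j := by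
  cases j <;> simp [fw] <;> linarith

lemma fl_box {ϑ : ℝ} (hϑ : 0 < ϑ) (j : Fld d) {R τ : ℝ} (hR : 0 < R) {w : Pt d}
    (hw : InBox ϑ R w) (hτ : |τ| ≤ R ^ fw ϑ j) : InBox ϑ (kap ϑ * R) (fl j τ w) := by
  obtain ⟨h1, h2, h3⟩ := hw
  have k0 := kap_ge ϑ
  have k1 := kap_pow hϑ
  have k2 := kap_pow' hϑ
  have p1 : 0 < R ^ ϑ := by positivity
  have p2 : 0 < R ^ (1 + ϑ) := by positivity
  have e1 : 2 * R ^ ϑ ≤ (kap ϑ * R) ^ ϑ := by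
    rw [Real.mul_rpow (by linarith) hR.le]
    exact mul_le_mul_of_nonneg_right k1 p1.le
  have e2 : 2 * R ^ (1 + ϑ) ≤ (kap ϑ * R) ^ (1 + ϑ) := by
    rw [Real.mul_rpow (by linarith) hR.le]
    exact mul_le_mul_of_nonneg_right k2 p2.le
  have e3 : 2 * R ≤ kap ϑ * R := mul_le_mul_of_nonneg_right k0 hR.le
  cases j with
  | Y =>
    simp only [fw] at hτ
    refine ⟨?_, ?_, ?_⟩
    · simp only [fl, flowY]
      exact (abs_add_le _ _).trans (by linarith)
    · simp only [fl, flowY]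
      refine (norm_add_le _ _).trans ?_
      rw [norm_smul, Real.norm_eq_abs]
      have : |τ| * ‖w.2.2‖ ≤ R ^ ϑ * R := mul_le_mul hτ h3 (norm_nonneg _) p1.le
      have h4 : R ^ ϑ * R = R ^ (1 + ϑ) := by
        rw [add_comm, Real.rpow_add hR, Real.rpow_one]
      linarith
    · simp only [fl, flowY]; linarith
  | Z i =>
    simp only [fw, Real.rpow_one] at hτ
    refine ⟨?_, ?_, ?_⟩
    · simp only [fl, flowZ]; linarith
    · simp only [fl, flowZ]; linarith
    · simp only [fl, flowZ]
      refine (norm_add_le _ _).trans ?_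
      rw [norm_smul, Real.norm_eq_abs]
      simp only [EuclideanSpace.norm_single, norm_one]
      linarith
  | X i =>
    simp only [fw] at hτ
    refine ⟨?_, ?_, ?_⟩
    · simp only [fl, flowX]; linarith
    · simp only [fl, flowX]
      refine (norm_add_le _ _).trans ?_
      rw [norm_smul, Real.norm_eq_abs]
      simp only [EuclideanSpace.norm_single, norm_one]
      linarith
    · simp only [fl, flowX]; linarith

lemma box_mono {ϑ : ℝ} (hϑ : 0 < ϑ) {R R' : ℝ} (hR : 0 < R) (h : R ≤ R') {w : Pt d}
    (hw : InBox ϑ R w) : InBox ϑ R' w :=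
  ⟨hw.1.trans (Real.rpow_le_rpow hR.le h hϑ.le),
    hw.2.1.trans (Real.rpow_le_rpow hR.le h (by linarith)), hw.2.2.trans h⟩

lemma box_zero {ϑ : ℝ} {R : ℝ} (hR : 0 < R) : InBox ϑ R (0 : Pt d) := by
  refine ⟨?_, ?_, ?_⟩ <;> simp <;> positivity

lemma box_hnorm {ϑ : ℝ} (hϑ : 0 < ϑ) {R : ℝ} {w : Pt d} (h : hnorm ϑ w ≤ R) : InBox ϑ R w := by
  unfold hnorm at h
  have a1 : 0 ≤ |w.1| ^ (1 / ϑ) := by positivity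
  have a2 : 0 ≤ ‖w.2.1‖ ^ (1 / (ϑ + 1)) := by positivity
  have a3 := norm_nonneg w.2.2
  refine ⟨?_, ?_, by linarith⟩
  · calc |w.1| = (|w.1| ^ (1 / ϑ)) ^ ϑ := by
          rw [← Real.rpow_mul (abs_nonneg _)]; field_simp; simp
      _ ≤ R ^ ϑ := Real.rpow_le_rpow a1 (by linarith) hϑ.le
  · calc ‖w.2.1‖ = (‖w.2.1‖ ^ (1 / (ϑ + 1))) ^ (1 + ϑ) := by
          rw [← Real.rpow_mul (norm_nonneg _), add_comm 1 ϑ, one_div_mul_cancel (by positivity),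
            Real.rpow_one]
      _ ≤ R ^ (1 + ϑ) := Real.rpow_le_rpow a2 (by linarith) (by linarith)

def dil (ϑ l : ℝ) (w : Pt d) : Pt d := (l ^ ϑ * w.1, l ^ (1 + ϑ) • w.2.1, l • w.2.2)

lemma dil_one (ϑ : ℝ) (w : Pt d) : dil ϑ 1 w = w := by simp [dil]

lemma dil_zero (ϑ l : ℝ) : dil ϑ l (0 : Pt d) = 0 := by simp [dil]

lemma dil_box {ϑ l R : ℝ} (hl : 0 < l) (hR : 0 < R) {w : Pt d} (h : InBox ϑ R w) :
    InBox ϑ (l * R) (dil ϑ l w) := by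
  obtain ⟨h1, h2, h3⟩ := h
  refine ⟨?_, ?_, ?_⟩ <;> simp only [dil]
  · rw [abs_mul, Real.mul_rpow hl.le hR.le, abs_of_pos (by positivity)]
    gcongr
  · rw [norm_smul, Real.mul_rpow hl.le hR.le, Real.norm_of_nonneg (by positivity)]
    gcongr
  · rw [norm_smul, Real.norm_of_nonneg hl.le]
    gcongr

lemma dil_fl {ϑ l : ℝ} (hl : 0 < l) (j : Fld d) (τ : ℝ) (w : Pt d) :
    dil ϑ l (fl j τ w) = fl j (l ^ fw ϑ j * τ) (dil ϑ l w) := by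
  cases j with
  | Y =>
    simp only [dil, fl, flowY, fw]
    refine Prod.ext (by simp; ring) (Prod.ext ?_ rfl)
    simp only [smul_add, smul_smul]
    congr 2
    rw [Real.rpow_add hl, Real.rpow_one]; ring
  | Z i =>
    simp [dil, fl, flowZ, fw, smul_smul]
  | X i =>
    simp [dil, fl, flowX, fw, smul_smul]

lemma co_dil (ϑ l : ℝ) (w : Pt d) (s : Sg d) : co (dil ϑ l w) s = l ^ wg ϑ s * co w s := by
  rcases s with s | s | s <;> simp [co, dil, wg]

lemma eval_dil {ϑ l : ℝ} (hl : 0 < l) (w : Pt d) (P : Pol d) :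
    eval (co (dil ϑ l w)) P =
      ∑ m ∈ P.support, l ^ wt (wg ϑ) m * (coeff m P * ∏ s, co w s ^ m s) := by
  rw [eval_eq']
  refine Finset.sum_congr rfl fun m _ => ?_
  simp only [co_dil, mul_pow, Finset.prod_mul_distrib, wt]
  rw [Real.rpow_sum_of_pos hl]
  simp only [Real.rpow_mul hl.le, Real.rpow_natCast]
  ring

/-- Finite sums of powers `l ^ s` with `s < α`. -/
def PS (α : ℝ) (h : ℝ → ℝ) : Prop := ∃ a : ℝ →₀ ℝ, (∀ s ∈ a.support, s < α) ∧
  ∀ l, 0 < l → h l = a.sum fun s c => c * l ^ s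

lemma PS.congr {α : ℝ} {f g : ℝ → ℝ} (hf : PS α f) (h : ∀ l, 0 < l → g l = f l) : PS α g := by
  obtain ⟨a, h1, h2⟩ := hf
  exact ⟨a, h1, fun l hl => by rw [h l hl, h2 l hl]⟩

lemma PS.add {α : ℝ} {f g : ℝ → ℝ} (hf : PS α f) (hg : PS α g) : PS α (fun l => f l + g l) := by
  classical
  obtain ⟨a, h1, h2⟩ := hf
  obtain ⟨b, h3, h4⟩ := hg
  refine ⟨a + b, fun s hs => ?_, fun l hl => ?_⟩
  · rcases Finset.mem_union.1 (Finsupp.support_add hs) with h | h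
    · exact h1 s h
    · exact h3 s h
  · rw [Finsupp.sum_add_index' (by simp) (by intros; ring)]
    simp only [h2 l hl, h4 l hl]

lemma PS.neg {α : ℝ} {f : ℝ → ℝ} (hf : PS α f) : PS α (fun l => - f l) := by
  obtain ⟨a, h1, h2⟩ := hf
  refine ⟨-a, fun s hs => h1 s (by simpa using hs), fun l hl => ?_⟩
  simp only [h2 l hl]
  rw [Finsupp.sum_neg_index (by simp)]
  simp [Finsupp.sum]

lemma PS.sub {α : ℝ} {f g : ℝ → ℝ} (hf : PS α f) (hg : PS α g) : PS α (fun l => f l - g l) := by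
  simpa [sub_eq_add_neg] using hf.add hg.neg

lemma PS.zero (α : ℝ) : PS α (fun _ => 0) := ⟨0, by simp, by simp⟩

lemma PS.mono' {α s : ℝ} (hs : s < α) (c : ℝ) : PS α (fun l => l ^ s * c) := by
  refine ⟨Finsupp.single s c, fun t ht => ?_, fun l _ => ?_⟩
  · have := Finsupp.support_single_subset ht
    simp at this; rwa [this]
  · simp [mul_comm]

lemma PS.const {α : ℝ} (hα : 0 < α) (c : ℝ) : PS α (fun _ => c) := by
  refine (PS.mono' hα c).congr fun l _ => by simp

lemma PS.sum {α : ℝ} {ι : Type*} (S : Finset ι) (f : ι → ℝ → ℝ) (hf : ∀ i ∈ S, PS α (f i)) :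
    PS α (fun l => ∑ i ∈ S, f i l) := by
  classical
  induction S using Finset.induction_on with
  | empty => simpa using PS.zero α
  | insert a S ha ih =>
    refine ((hf a (by simp)).add (ih fun i hi => hf i (by simp [hi]))).congr fun l _ => ?_
    rw [Finset.sum_insert ha]

lemma PS.eval {ϑ α : ℝ} {P : Pol d} (hP : WLT (wg ϑ) α P) (w : Pt d) :
    PS α (fun l => eval (co (dil ϑ l w)) P) := by
  refine (PS.sum P.support _ fun m hm => PS.mono' (hP m (by simpa using hm))
    (coeff m P * ∏ s, co w s ^ m s)).congr fun l hl => eval_dil hl w P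

lemma PS.eq_zero {α C : ℝ} {h : ℝ → ℝ} (hh : PS α h)
    (hb : ∀ l, 0 < l → l ≤ 1 → |h l| ≤ C * l ^ α) : ∀ l, 0 < l → h l = 0 := by
  obtain ⟨a, h1, h2⟩ := hh
  suffices ha : a = 0 by
    intro l hl; rw [h2 l hl, ha]; simp
  by_contra hne
  have hS : a.support.Nonempty := Finsupp.support_nonempty_iff.2 hne
  set s0 := a.support.min' hS with hs0
  have hmem : s0 ∈ a.support := Finset.min'_mem _ _
  have tpow : ∀ e : ℝ, 0 < e → Tendsto (fun l : ℝ => l ^ e) (𝓝[>] 0) (𝓝 0) := by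
    intro e he
    have : Tendsto (fun l : ℝ => l ^ e) (𝓝 0) (𝓝 (0 ^ e)) :=
      (Real.continuousAt_rpow_const 0 e (Or.inr he.le)).tendsto
    rw [Real.zero_rpow he.ne'] at this
    exact this.mono_left nhdsWithin_le_nhds
  have t1 : Tendsto (fun l : ℝ => ∑ s ∈ a.support, a s * l ^ (s - s0)) (𝓝[>] 0) (𝓝 (a s0)) := by
    have : a s0 = ∑ s ∈ a.support, if s = s0 then a s0 else 0 := by
      rw [Finset.sum_ite_eq' a.support s0 (fun _ => a s0), if_pos hmem]
    rw [this]
    refine tendsto_finset_sum _ fun s hs => ?_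
    split_ifs with hss
    · subst hss; simp
    · have : 0 < s - s0 := by
        have := Finset.min'_le _ _ hs
        exact sub_pos.2 (lt_of_le_of_ne this (Ne.symm hss))
      simpa using (tpow _ this).const_mul (a s)
  have t2 : Tendsto (fun l : ℝ => ∑ s ∈ a.support, a s * l ^ (s - s0)) (𝓝[>] 0) (𝓝 0) := by
    have t3 : Tendsto (fun l : ℝ => C * l ^ (α - s0)) (𝓝[>] 0) (𝓝 0) := by
      simpa using (tpow _ (sub_pos.2 (h1 _ hmem))).const_mul C
    refine squeeze_zero_norm' ?_ t3
    filter_upwards [Ioc_mem_nhdsGT (zero_lt_one' ℝ)] with l hl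
    have hb' := hb l hl.1 hl.2
    have e : ∑ s ∈ a.support, a s * l ^ (s - s0) = h l * l ^ (-s0) := by
      rw [h2 l hl.1, Finsupp.sum, Finset.sum_mul]
      refine Finset.sum_congr rfl fun s _ => ?_
      rw [sub_eq_add_neg, Real.rpow_add hl.1]; ring
    have p : 0 < l ^ (-s0) := Real.rpow_pos_of_pos hl.1 _
    rw [e, Real.norm_eq_abs, abs_mul, abs_of_pos p, sub_eq_add_neg, Real.rpow_add hl.1,
      ← mul_assoc]
    exact mul_le_mul_of_nonneg_right hb' p.le
  exact (Finsupp.mem_support_iff.1 hmem) (tendsto_nhds_unique t1 t2)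

/-- A polynomial whose dilates are sums of powers less than `α` has weight less than `α`. -/
lemma exists_wlt {ϑ α : ℝ} (P : Pol d)
    (h : ∀ w : Pt d, PS α (fun l => eval (co (dil ϑ l w)) P)) :
    ∃ Q : Pol d, WLT (wg ϑ) α Q ∧ ∀ w : Pt d, eval (co w) P = eval (co w) Q := by
  classical
  let lo := P.support.filter fun m => wt (wg ϑ) m < α
  let hi := P.support.filter fun m => ¬ wt (wg ϑ) m < α
  let Q : Pol d := ∑ m ∈ lo, monomial m (coeff m P)
  let H : Pol d := ∑ m ∈ hi, monomial m (coeff m P)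
  have hPQ : P = Q + H := by
    conv_lhs => rw [← support_sum_monomial_coeff P]
    exact (Finset.sum_filter_add_sum_filter_not _ _ _).symm
  have hQ : WLT (wg ϑ) α Q := WLT.sum _ _ fun m hm => WLT.monomial (Finset.mem_filter.1 hm).2 _
  refine ⟨Q, hQ, fun w => ?_⟩
  have hH : PS α (fun l => eval (co (dil ϑ l w)) H) := by
    refine ((h w).sub (PS.eval hQ w)).congr fun l _ => ?_
    conv_rhs => rw [hPQ]
    simp
  have hH' : ∀ l : ℝ, 0 < l → eval (co (dil ϑ l w)) H =
      ∑ m ∈ hi, l ^ wt (wg ϑ) m * (coeff m P * ∏ s, co w s ^ m s) := by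
    intro l hl
    rw [map_sum]
    refine Finset.sum_congr rfl fun m _ => ?_
    rw [eval_monomial, Finsupp.prod_fintype _ _ (by simp)]
    simp only [co_dil, mul_pow, Finset.prod_mul_distrib, wt]
    rw [Real.rpow_sum_of_pos hl]
    simp only [Real.rpow_mul hl.le, Real.rpow_natCast]
    ring
  have := hH.eq_zero (C := ∑ m ∈ hi, |coeff m P * ∏ s, co w s ^ m s|) (by
    intro l hl hl1
    rw [hH' l hl, Finset.sum_mul]
    refine (Finset.abs_sum_le_sum_abs _ _).trans (Finset.sum_le_sum fun m hm => ?_)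
    rw [abs_mul, mul_comm, abs_of_pos (Real.rpow_pos_of_pos hl _)]
    refine mul_le_mul_of_nonneg_left ?_ (abs_nonneg _)
    exact Real.rpow_le_rpow_of_exponent_ge hl hl1 (not_lt.1 (Finset.mem_filter.1 hm).2)) 1 one_pos
  rw [dil_one] at this
  conv_lhs => rw [hPQ, map_add, this, add_zero]

/-- Markov type inequality in one variable. -/
lemma markov (N : ℕ) : ∃ C : ℝ, 0 ≤ C ∧ ∀ (p : Polynomial ℝ) (M ρ : ℝ), p.natDegree ≤ N → 0 < ρ →
    (∀ τ, |τ| ≤ ρ → |p.eval τ| ≤ M) → |p.derivative.eval 0| ≤ C * M / ρ := by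
  classical
  let s : Finset ℕ := Finset.range (N + 1)
  let v : ℕ → ℝ := fun i => (i : ℝ) / (N + 1)
  have hv : Set.InjOn v s := by
    intro a _ b _ hab
    have : (N : ℝ) + 1 ≠ 0 := by positivity
    simp only [v] at hab
    field_simp at hab
    exact_mod_cast hab
  refine ⟨∑ i ∈ s, |(Lagrange.basis s v i).derivative.eval 0|,
    Finset.sum_nonneg fun _ _ => abs_nonneg _, fun p M ρ hp hρ hM => ?_⟩
  let q : Polynomial ℝ := p.comp (Polynomial.C ρ * Polynomial.X)
  have hq : q.natDegree ≤ N := by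
    refine (Polynomial.natDegree_comp_le).trans ?_
    have : (Polynomial.C ρ * Polynomial.X).natDegree ≤ 1 := by compute_degree
    calc _ ≤ p.natDegree * 1 := Nat.mul_le_mul_left _ this
      _ ≤ N := by simpa using hp
  have hq' : q.degree < s.card := by
    refine (Polynomial.degree_le_natDegree).trans_lt ?_
    simp only [s, Finset.card_range]
    exact_mod_cast Nat.lt_succ_of_le hq
  have h1 := Lagrange.eq_interpolate hv hq'
  have h2 : q.derivative.eval 0 = p.derivative.eval 0 * ρ := by
    simp [q, Polynomial.derivative_comp]; ring
  have h3 : q.derivative.eval 0 =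
      ∑ i ∈ s, q.eval (v i) * (Lagrange.basis s v i).derivative.eval 0 := by
    conv_lhs => rw [h1]
    simp [Lagrange.interpolate_apply, Polynomial.eval_finsetSum]
  rw [le_div_iff₀ hρ]
  calc |p.derivative.eval 0| * ρ = |q.derivative.eval 0| := by rw [h2, abs_mul, abs_of_pos hρ]
    _ ≤ ∑ i ∈ s, |q.eval (v i) * (Lagrange.basis s v i).derivative.eval 0| := by
        rw [h3]; exact Finset.abs_sum_le_sum_abs _ _
    _ ≤ ∑ i ∈ s, |(Lagrange.basis s v i).derivative.eval 0| * M := by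
        refine Finset.sum_le_sum fun i hi => ?_
        rw [abs_mul, mul_comm]
        refine mul_le_mul_of_nonneg_left ?_ (abs_nonneg _)
        simp only [q, Polynomial.eval_comp, Polynomial.eval_mul, Polynomial.eval_C,
          Polynomial.eval_X]
        apply hM
        have hi' : (i : ℝ) ≤ N + 1 := by
          have := Finset.mem_range.1 hi
          exact_mod_cast this.le
        rw [abs_mul, abs_of_pos hρ]
        have : |v i| ≤ 1 := by
          simp only [v]
          rw [abs_of_nonneg (by positivity), div_le_one (by positivity)]
          exact hi'
        nlinarith
    _ = _ := by rw [Finset.sum_mul]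

lemma le_of_scale {A C α ρ : ℝ} (hα : 0 < α) (h : ∀ R, ρ < R → A ≤ C * R ^ α) :
    A ≤ C * ρ ^ α := by
  have t : Tendsto (fun R : ℝ => C * R ^ α) (𝓝[>] ρ) (𝓝 (C * ρ ^ α)) :=
    ((Real.continuousAt_rpow_const ρ α (Or.inr hα.le)).tendsto.const_mul C).mono_left
      nhdsWithin_le_nhds
  refine ge_of_tendsto t ?_
  filter_upwards [self_mem_nhdsWithin] with R hR using h R hR

end ITF

namespace ITF
open MvPolynomial Filter Topology

lemma fl_gmul (j : Fld d) (τ : ℝ) (z w : Pt d) : fl j τ (gmul z w) = gmul z (fl j τ w) := by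
  cases j with
  | Y =>
    simp only [fl, flowY, gmul]
    refine Prod.ext (by simp; ring) (Prod.ext ?_ rfl)
    simp only [smul_add, add_smul]; abel
  | Z i => simp [fl, flowZ, gmul, add_assoc]
  | X i =>
    simp only [fl, flowX, gmul]
    refine Prod.ext (by simp) (Prod.ext ?_ rfl)
    simp only; abel

lemma gmul_zero (z : Pt d) : gmul z 0 = z := by simp [gmul]

lemma fl_zero (j : Fld d) (z : Pt d) : fl j 0 z = z := by
  cases j <;> simp [fl, flowX, flowY, flowZ]

lemma fl_add (j : Fld d) (a b : ℝ) (z : Pt d) : fl j (a + b) z = fl j b (fl j a z) := by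
  cases j <;> simp [fl, flowX, flowY, flowZ, add_smul, add_assoc]

lemma gmul_ginv (z z₀ : Pt d) : gmul z₀ (gmul (ginv z₀) z) = z := by
  simp only [gmul, ginv]
  refine Prod.ext (by simp) (Prod.ext ?_ (by simp))
  simp only [smul_add, add_smul, smul_neg, neg_smul]; abel

def Apx (ϑ α : ℝ) (f : Pt d → ℝ) (P : Pt d → Pol d) : Prop :=
  ∃ C : ℝ, ∀ z₀, WLT (wg ϑ) α (P z₀) ∧ ∀ R, 0 < R → ∀ w, InBox ϑ R w →
    |f (gmul z₀ w) - eval (co w) (P z₀)| ≤ C * R ^ α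

lemma Apx.val {ϑ α : ℝ} (hα : 0 < α) {f : Pt d → ℝ} {P : Pt d → Pol d} (h : Apx ϑ α f P)
    (z : Pt d) : f z = eval (co 0) (P z) := by
  obtain ⟨C, hC⟩ := h
  have h1 : |f z - eval (co 0) (P z)| ≤ C * 0 ^ α := by
    refine le_of_scale hα fun R hR => ?_
    have := (hC z).2 R hR 0 (box_zero hR)
    rwa [gmul_zero] at this
  rw [Real.zero_rpow hα.ne', mul_zero] at h1
  exact sub_eq_zero.1 (abs_eq_zero.1 (le_antisymm h1 (abs_nonneg _)))

lemma hasDerivAt_zero_of_bound {e : ℝ → ℝ} {C q : ℝ} (hq : 1 < q) (h0 : e 0 = 0)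
    (h : ∀ τ, τ ≠ 0 → |e τ| ≤ C * |τ| ^ q) : HasDerivAt e 0 0 := by
  rw [hasDerivAt_iff_tendsto_slope]
  have t : Tendsto (fun τ : ℝ => C * |τ| ^ (q - 1)) (𝓝[≠] 0) (𝓝 0) := by
    have : Tendsto (fun τ : ℝ => C * |τ| ^ (q - 1)) (𝓝 0) (𝓝 (C * |0| ^ (q - 1))) := by
      refine Tendsto.const_mul C ?_
      exact (continuous_abs.tendsto 0).rpow_const (Or.inr (by linarith))
    rw [abs_zero, Real.zero_rpow (by linarith), mul_zero] at this
    exact this.mono_left nhdsWithin_le_nhds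
  refine squeeze_zero_norm' ?_ t
  filter_upwards [self_mem_nhdsWithin] with τ hτ
  have hτ' : τ ≠ 0 := hτ
  have hp : 0 < |τ| := abs_pos.2 hτ'
  rw [slope_def_field, h0, sub_zero, sub_zero, Real.norm_eq_abs, abs_div, div_le_iff₀ hp, mul_assoc]
  refine (h τ hτ').trans (le_of_eq ?_)
  congr 1
  rw [Real.rpow_sub hp, Real.rpow_one]; field_simp

lemma Apx.D {ϑ α : ℝ} (hϑ : 0 < ϑ) {f : Pt d → ℝ} {P : Pt d → Pol d}
    (h : Apx ϑ α f P) (j : Fld d) (hj : fw ϑ j < α) :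
    Apx ϑ (α - fw ϑ j) (fun z => deriv (fun τ => f (fl j τ z)) 0) (fun z => DP j (P z)) := by
  have hω := fw_pos hϑ j
  have hα : 0 < α := hω.trans hj
  have hval := h.val hα
  obtain ⟨C, hC⟩ := h
  have hk : 0 < kap ϑ := by linarith [kap_ge ϑ]
  have hder : ∀ z, deriv (fun τ => f (fl j τ z)) 0 = eval (co 0) (DP j (P z)) := by
    intro z
    have h1 := hasDerivAt_fl j (P z) 0 0
    rw [fl_zero] at h1
    have h2 : HasDerivAt (fun τ => f (fl j τ z) - eval (co (fl j τ 0)) (P z)) 0 0 := by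
      refine hasDerivAt_zero_of_bound (q := α / fw ϑ j) (C := C * kap ϑ ^ α) ?_ ?_ ?_
      · rwa [one_lt_div hω]
      · rw [fl_zero, fl_zero, hval z, sub_self]
      · intro τ hτ
        have hp : 0 < |τ| := abs_pos.2 hτ
        have hR : 0 < |τ| ^ (1 / fw ϑ j) := by positivity
        have hb : InBox ϑ (kap ϑ * |τ| ^ (1 / fw ϑ j)) (fl j τ (0 : Pt d)) := by
          refine fl_box hϑ j hR (box_zero hR) ?_
          rw [← Real.rpow_mul hp.le, one_div_mul_cancel hω.ne', Real.rpow_one]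
        have := (hC z).2 _ (by positivity) _ hb
        rw [← fl_gmul, gmul_zero, Real.mul_rpow hk.le hR.le, ← Real.rpow_mul hp.le] at this
        rw [mul_assoc]
        convert this using 4
        ring
    have h3 := h2.add h1
    rw [zero_add] at h3
    refine HasDerivAt.deriv (h3.congr_of_eventuallyEq (Eventually.of_forall fun τ => ?_))
    simp
  obtain ⟨K, hK0, hK⟩ := markov ⌈α / min 1 ϑ⌉₊
  refine ⟨K * (2 * C * kap ϑ ^ α), fun z₀ => ⟨(hC z₀).1.DP j, fun R hR w hw => ?_⟩⟩
  simp only [hder]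
  set z₁ := gmul z₀ w with hz₁
  obtain ⟨q1, hq1, hq1'⟩ := exists_poly_fl hϑ (hC z₁).1 j 0
  obtain ⟨q0, hq0, hq0'⟩ := exists_poly_fl hϑ (hC z₀).1 j w
  have d1 : q1.derivative.eval 0 = eval (co 0) (DP j (P z₁)) := by
    have := hasDerivAt_fl j (P z₁) 0 0
    simp only [hq1', fl_zero] at this
    exact (q1.hasDerivAt 0).unique this
  have d0 : q0.derivative.eval 0 = eval (co w) (DP j (P z₀)) := by
    have := hasDerivAt_fl j (P z₀) w 0
    simp only [hq0', fl_zero] at this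
    exact (q0.hasDerivAt 0).unique this
  have hRω : 0 < R ^ fw ϑ j := by positivity
  have key := hK (q1 - q0) (2 * C * (kap ϑ * R) ^ α) (R ^ fw ϑ j)
    ((Polynomial.natDegree_sub_le _ _).trans (max_le hq1 hq0)) hRω (by
      intro τ hτ
      have b1 := (hC z₁).2 _ (by positivity) _ (fl_box hϑ j hR (box_zero hR) hτ)
      have b0 := (hC z₀).2 _ (by positivity) _ (fl_box hϑ j hR hw hτ)
      rw [← fl_gmul, gmul_zero, hq1'] at b1
      rw [← fl_gmul, ← hz₁, hq0'] at b0
      rw [Polynomial.eval_sub]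
      rw [abs_le] at b1 b0 ⊢
      constructor <;> linarith [b1.1, b1.2, b0.1, b0.2])
  rw [Polynomial.derivative_sub, Polynomial.eval_sub, d1, d0] at key
  refine key.trans (le_of_eq ?_)
  rw [Real.mul_rpow hk.le hR.le, Real.rpow_sub hR]
  field_simp

/-! Coefficients of iterated derivatives. -/

def mfac (m : Sg d →₀ ℕ) : ℝ := ∏ s, ((m s).factorial : ℝ)

lemma mfac_pos (m : Sg d →₀ ℕ) : 0 < mfac m := Finset.prod_pos fun s _ => by positivity

lemma mfac_add (m : Sg d →₀ ℕ) (s : Sg d) :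
    mfac (m + Finsupp.single s 1) = mfac m * (m s + 1) := by
  classical
  unfold mfac
  rw [← Finset.mul_prod_erase _ _ (Finset.mem_univ s),
    ← Finset.mul_prod_erase Finset.univ (fun s => ((m s).factorial : ℝ)) (Finset.mem_univ s)]
  have : ∏ x ∈ Finset.univ.erase s, (((m + Finsupp.single s 1 : Sg d →₀ ℕ) x).factorial : ℝ) =
      ∏ x ∈ Finset.univ.erase s, ((m x).factorial : ℝ) := by
    refine Finset.prod_congr rfl fun x hx => ?_
    have : s ≠ x := (Finset.ne_of_mem_erase hx).symm
    simp [this.symm]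
  rw [this]
  simp [Nat.factorial_succ]
  ring

lemma mfac_pderiv (m : Sg d →₀ ℕ) (s : Sg d) (P : Pol d) :
    mfac m * coeff m (pderiv s P) =
      mfac (m + Finsupp.single s 1) * coeff (m + Finsupp.single s 1) P := by
  rw [coeff_pderiv, mfac_add]; ring

/-- Iterated polynomial derivative along a list. -/
def DL (g : Fin d → Fld d) : List (Fin d) → Pol d → Pol d
  | [], P => P
  | i :: l, P => DP (g i) (DL g l P)

def ls (g : Fin d → Sg d) : List (Fin d) → (Sg d →₀ ℕ)
  | [] => 0
  | i :: l => Finsupp.single (g i) 1 + ls g l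

lemma mfac_DL (g : Fin d → Fld d) (g' : Fin d → Sg d)
    (hg : ∀ i P, DP (g i) P = pderiv (g' i) P) (l : List (Fin d)) (P : Pol d) :
    ∀ m, mfac m * coeff m (DL g l P) = mfac (m + ls g' l) * coeff (m + ls g' l) P := by
  induction l with
  | nil => intro m; simp [DL, ls]
  | cons i l ih =>
    intro m
    simp only [DL, ls]
    rw [hg, mfac_pderiv, ih, add_assoc]

lemma mfac_Y (k : ℕ) (P : Pol d) :
    mfac (Finsupp.single (st : Sg d) k) * coeff (Finsupp.single (st : Sg d) k) (DP Fld.Y P) =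
      mfac (Finsupp.single (st : Sg d) (k + 1)) * coeff (Finsupp.single (st : Sg d) (k + 1)) P := by
  classical
  have : coeff (Finsupp.single (st : Sg d) k) (DP Fld.Y P) =
      coeff (Finsupp.single (st : Sg d) k) (pderiv (st : Sg d) P) := by
    simp [DP, coeff_sum, coeff_X_mul', Finsupp.single_apply]
  rw [this, mfac_pderiv, ← Finsupp.single_add]

lemma mfac_Yiter (k : ℕ) : ∀ (n : ℕ) (P : Pol d),
    mfac (Finsupp.single (st : Sg d) n) * coeff (Finsupp.single (st : Sg d) n) ((DP Fld.Y)^[k] P) =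
      mfac (Finsupp.single (st : Sg d) (n + k)) * coeff (Finsupp.single (st : Sg d) (n + k)) P := by
  induction k with
  | zero => intro n P; simp
  | succ k ih =>
    intro n P
    rw [Function.iterate_succ_apply', mfac_Y, ih]
    congr 3 <;> ring_nf

lemma co_zero : co (0 : Pt d) = 0 := by
  funext s; rcases s with s | s | s <;> simp [co]

lemma Apx.DL {ϑ α : ℝ} (hϑ : 0 < ϑ) {f : Pt d → ℝ} {P : Pt d → Pol d}
    (h : Apx ϑ α f P) (g : Fin d → Fld d) (D : Fin d → (Pt d → ℝ) → Pt d → ℝ)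
    (hD : ∀ i u z, D i u z = deriv (fun τ => u (fl (g i) τ z)) 0) (ω : ℝ)
    (hω : ∀ i, fw ϑ (g i) = ω) (hω0 : 0 < ω) (l : List (Fin d)) (hl : ω * l.length < α) :
    Apx ϑ (α - ω * l.length) (derivList D l f) (fun z => DL g l (P z)) := by
  induction l with
  | nil => simpa [derivList, ITF.DL] using h
  | cons i l ih =>
    simp only [List.length_cons, Nat.cast_add, Nat.cast_one] at hl ⊢
    have h1 := (ih (by linarith)).D hϑ (g i) (by rw [hω]; linarith)
    rw [hω] at h1
    have e : α - ω * l.length - ω = α - ω * (l.length + 1) := by ring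
    rw [e] at h1
    have e2 : derivList D (i :: l) f =
        fun z => deriv (fun τ => derivList D l f (fl (g i) τ z)) 0 := by
      funext z; exact hD i _ z
    rw [e2]; exact h1

lemma Apx.Yiter {ϑ α : ℝ} (hϑ : 0 < ϑ) {f : Pt d → ℝ} {P : Pt d → Pol d}
    (h : Apx ϑ α f P) (k : ℕ) (hk : ϑ * k < α) :
    Apx ϑ (α - ϑ * k) (lieY^[k] f) (fun z => (DP Fld.Y)^[k] (P z)) := by
  induction k with
  | zero => simpa using h
  | succ k ih =>
    push_cast at hk ⊢
    have h1 := (ih (by linarith)).D hϑ Fld.Y (by simp only [fw]; linarith)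
    simp only [fw] at h1
    have e : α - ϑ * k - ϑ = α - ϑ * (k + 1) := by ring
    rw [e] at h1
    simp only [Function.iterate_succ_apply']
    exact h1

lemma idxList_length (β : Fin d → ℕ) : (idxList β).length = ∑ i, β i := by
  simp [idxList, List.length_flatten, List.map_ofFn, List.sum_ofFn]

lemma ls_apply (g : Fin d → Sg d) (hg : Function.Injective g) (l : List (Fin d)) (i : Fin d) :
    ls g l (g i) = l.count i := by
  induction l with
  | nil => simp [ls]
  | cons a l ih =>
    simp only [ls, Finsupp.add_apply, ih, List.count_cons, Finsupp.single_apply, hg.eq_iff,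
      beq_iff_eq]
    ring

lemma ls_apply_ne (g : Fin d → Sg d) (s : Sg d) (hs : ∀ i, g i ≠ s) (l : List (Fin d)) :
    ls g l s = 0 := by
  induction l with
  | nil => simp [ls]
  | cons a l ih => simp [ls, ih, Finsupp.single_apply, hs]

lemma idxList_count (β : Fin d → ℕ) (i : Fin d) : (idxList β).count i = β i := by
  simp [idxList, List.count_flatten, List.map_ofFn, List.sum_ofFn, Function.comp_def,
    List.count_replicate]

/-- The monomial exponent of a Taylor index. -/
def ex (p : ℕ × (Fin d → ℕ) × (Fin d → ℕ)) : Sg d →₀ ℕ :=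
  Finsupp.equivFunOnFinite.symm
    (Sum.elim (fun _ => p.1) (Sum.elim (fun i => p.2.1 i) (fun i => p.2.2 i)))

lemma ex_eq (p : ℕ × (Fin d → ℕ) × (Fin d → ℕ)) :
    ex p = Finsupp.single st p.1 + ls sv (idxList p.2.2) + ls sx (idxList p.2.1) := by
  have ix : Function.Injective (sx : Fin d → Sg d) := fun a b h => by simpa using h
  have iv : Function.Injective (sv : Fin d → Sg d) := fun a b h => by simpa using h
  ext s
  rcases s with s | s | s
  · simp [ex, ls_apply_ne]
  · have := ls_apply sx ix (idxList p.2.1) s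
    simp [ex, this, ls_apply_ne, idxList_count]
  · have := ls_apply sv iv (idxList p.2.2) s
    simp [ex, this, ls_apply_ne, idxList_count]

lemma mfac_ex (p : ℕ × (Fin d → ℕ) × (Fin d → ℕ)) : mfac (ex p) =
    (p.1.factorial : ℝ) * (∏ i, ((p.2.1 i).factorial : ℝ)) * (∏ i, ((p.2.2 i).factorial : ℝ)) := by
  simp [mfac, ex, Fintype.prod_sum_type, mul_assoc]

lemma wt_ex (ϑ : ℝ) (p : ℕ × (Fin d → ℕ) × (Fin d → ℕ)) : wt (wg ϑ) (ex p) =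
    ϑ * (p.1 : ℝ) + (1 + ϑ) * ((∑ i, p.2.1 i : ℕ) : ℝ) + ((∑ i, p.2.2 i : ℕ) : ℝ) := by
  simp [wt, ex, wg, Fintype.sum_sum_type, Finset.mul_sum, add_assoc]

lemma taylor_coeff {ϑ α : ℝ} (hϑ : 0 < ϑ) {f : Pt d → ℝ} {P : Pt d → Pol d}
    (h : Apx ϑ α f P) (p : ℕ × (Fin d → ℕ) × (Fin d → ℕ)) (hp : wt (wg ϑ) (ex p) < α) (z : Pt d) :
    lieY^[p.1] (dvPow p.2.2 (dxPow p.2.1 f)) z = mfac (ex p) * coeff (ex p) (P z) := by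
  rw [wt_ex] at hp
  rw [← idxList_length, ← idxList_length] at hp
  have n1 : (0 : ℝ) ≤ ϑ * (p.1 : ℝ) := by positivity
  have n2 : (0 : ℝ) ≤ (1 + ϑ) * ((idxList p.2.1).length : ℝ) := by positivity
  have n3 : (0 : ℝ) ≤ ((idxList p.2.2).length : ℝ) := by positivity
  have h1 := h.DL hϑ Fld.X dx (fun i u z => rfl) (1 + ϑ) (fun i => rfl) (by linarith)
    (idxList p.2.1) (by linarith)
  have h2 := h1.DL hϑ Fld.Z dv (fun i u z => rfl) 1 (fun i => rfl) one_pos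
    (idxList p.2.2) (by linarith)
  have h3 := h2.Yiter hϑ p.1 (by linarith)
  have h4 := h3.val (by linarith) z
  rw [co_zero, eval_zero, constantCoeff_eq] at h4
  have e0 : mfac (0 : Sg d →₀ ℕ) = 1 := by simp [mfac]
  have h5 := mfac_Yiter p.1 0 (DL Fld.Z (idxList p.2.2) (DL Fld.X (idxList p.2.1) (P z)))
  rw [Finsupp.single_zero, e0, one_mul, zero_add,
    mfac_DL Fld.Z sv (fun _ _ => rfl), mfac_DL Fld.X sx (fun _ _ => rfl), ← ex_eq] at h5
  rw [← h5]
  exact h4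

lemma taylor_eq {ϑ α : ℝ} (hϑ : 0 < ϑ) (hα : 0 < α) {f : Pt d → ℝ} {P : Pt d → Pol d}
    (h : Apx ϑ α f P) (z₀ z : Pt d) :
    taylorPoly ϑ α f z₀ z = eval (co (gmul (ginv z₀) z)) (P z₀) := by
  classical
  have hP : WLT (wg ϑ) α (P z₀) := by
    obtain ⟨C, hC⟩ := h; exact (hC z₀).1
  have hinj : Function.Injective (ex : ℕ × (Fin d → ℕ) × (Fin d → ℕ) → _) := by
    intro p q hpq
    refine Prod.ext ?_ (Prod.ext ?_ ?_)
    · simpa [ex] using DFunLike.congr_fun hpq st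
    · funext i; simpa [ex] using DFunLike.congr_fun hpq (sx i)
    · funext i; simpa [ex] using DFunLike.congr_fun hpq (sv i)
  have hsub : (P z₀).support ⊆ (taylorIdx ϑ α d).image ex := by
    intro m hm
    have hw := hP m (by simpa using hm)
    let p : ℕ × (Fin d → ℕ) × (Fin d → ℕ) := (m st, fun i => m (sx i), fun i => m (sv i))
    have hpm : ex p = m := by
      ext s; rcases s with s | s | s <;> simp [ex, p]
    rw [← hpm, wt_ex] at hw
    refine Finset.mem_image.2 ⟨p, ?_, hpm⟩
    have n1 : (0 : ℝ) ≤ ϑ * (p.1 : ℝ) := by positivity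
    have n2 : (0 : ℝ) ≤ (1 + ϑ) * ((∑ i, p.2.1 i : ℕ) : ℝ) := by positivity
    have n2' : ((∑ i, p.2.1 i : ℕ) : ℝ) ≤ (1 + ϑ) * ((∑ i, p.2.1 i : ℕ) : ℝ) := by
      have : (0 : ℝ) ≤ ϑ * ((∑ i, p.2.1 i : ℕ) : ℝ) := by positivity
      linarith
    have n3 : (0 : ℝ) ≤ ((∑ i, p.2.2 i : ℕ) : ℝ) := by positivity
    have bd : ∀ (g : Fin d → ℕ), ((∑ i, g i : ℕ) : ℝ) < α → ∀ i, g i < ⌈α⌉₊ + 1 := by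
      intro g hg i
      have h1 : g i ≤ ∑ i, g i := Finset.single_le_sum (fun _ _ => Nat.zero_le _) (Finset.mem_univ i)
      have h2 : (∑ i, g i) < ⌈α⌉₊ := Nat.lt_ceil.2 hg
      omega
    refine Finset.mem_filter.2 ⟨?_, hw⟩
    refine Finset.mem_product.2 ⟨?_, Finset.mem_product.2 ⟨?_, ?_⟩⟩
    · have : p.1 < ⌈α / ϑ⌉₊ := by
        rw [Nat.lt_ceil, lt_div_iff₀ hϑ]; linarith
      exact Finset.mem_range.2 (by omega)
    · refine Fintype.mem_piFinset.2 fun i => Finset.mem_range.2 (bd p.2.1 (by linarith) i)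
    · refine Fintype.mem_piFinset.2 fun i => Finset.mem_range.2 (bd p.2.2 (by linarith) i)
  rw [eval_eq', Finset.sum_subset hsub (fun m _ hm => by
    rw [notMem_support_iff.1 hm, zero_mul]), Finset.sum_image (hinj.injOn)]
  unfold taylorPoly
  refine Finset.sum_congr rfl fun p hp => ?_
  have hw : wt (wg ϑ) (ex p) < α := by
    rw [wt_ex]; exact (Finset.mem_filter.1 hp).2
  rw [taylor_coeff hϑ h p hw, ← mfac_ex, mul_div_cancel_left₀ _ (mfac_pos _).ne']
  congr 1
  simp only [Fintype.prod_sum_type, ex, co, gmul, ginv]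
  simp only [mul_assoc]
  congr 1
  · simp; congr 1; ring
  congr 1
  · refine Finset.prod_congr rfl fun i _ => ?_
    simp; congr 1; ring
  · refine Finset.prod_congr rfl fun i _ => ?_
    simp; congr 1; ring

end ITF

namespace ITF
open MvPolynomial Filter Topology

def good : Fld d → Prop
  | Fld.X _ => False
  | _ => True

def run : List (Fld d × ℝ) → Pt d → Pt d
  | [], p => p
  | a :: L, p => run L (fl a.1 a.2 p)

def inc (F : Fld d → Pol d) : List (Fld d × ℝ) → Pt d → ℝ
  | [], _ => 0
  | a :: L, p =>
    (eval (co (fl a.1 a.2 p)) (F a.1) - eval (co p) (F a.1)) + inc F L (fl a.1 a.2 p)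

lemma run_append (L L' : List (Fld d × ℝ)) : ∀ p, run (L ++ L') p = run L' (run L p) := by
  induction L with
  | nil => intro p; rfl
  | cons a L ih => intro p; simp only [List.cons_append, run]; exact ih _

def Ee (κ : ℝ) : ℕ → ℝ
  | 0 => 0
  | n + 1 => 1 + Ee κ n * κ

lemma Ee_nonneg {κ : ℝ} (hκ : 0 ≤ κ) : ∀ n, 0 ≤ Ee κ n
  | 0 => le_rfl
  | n + 1 => by
    have := Ee_nonneg hκ n
    simp only [Ee]; positivity

def LegOK (ϑ α K : ℝ) (U : Pt d → ℝ) (F : Pol d) (j : Fld d) : Prop :=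
  ∀ R, 0 < R → ∀ w, InBox ϑ R w → ∀ τ, |τ| ≤ R ^ fw ϑ j →
    |(U (fl j τ w) - eval (co (fl j τ w)) F) - (U w - eval (co w) F)| ≤ K * R ^ α

lemma err {ϑ α K : ℝ} (hϑ : 0 < ϑ) {U : Pt d → ℝ} {F : Fld d → Pol d}
    (hF : ∀ j, good j → LegOK ϑ α K U (F j) j) (L : List (Fld d × ℝ)) :
    ∀ (R : ℝ) (p : Pt d), 0 < R → InBox ϑ R p → (∀ a ∈ L, good a.1) →
      (∀ a ∈ L, |a.2| ≤ R ^ fw ϑ a.1) →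
      |U (run L p) - U p - inc F L p| ≤ Ee (kap ϑ ^ α) L.length * K * R ^ α := by
  induction L with
  | nil => intro R p _ _ _ _; simp [run, inc, Ee]
  | cons a L ih =>
    intro R p hR hp hg hL
    have hk : 2 ≤ kap ϑ := kap_ge ϑ
    have h1 := hF a.1 (hg a (by simp)) R hR p hp a.2 (hL a (by simp))
    have h2 := ih (kap ϑ * R) (fl a.1 a.2 p) (by positivity)
      (fl_box hϑ a.1 hR hp (hL a (by simp))) (fun b hb => hg b (by simp [hb]))
      (fun b hb => (hL b (by simp [hb])).trans (by
        have := fw_pos hϑ b.1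
        refine Real.rpow_le_rpow hR.le ?_ this.le
        nlinarith))
    rw [Real.mul_rpow (by linarith) hR.le] at h2
    simp only [run, inc, List.length_cons, Ee]
    have e : (1 + Ee (kap ϑ ^ α) L.length * kap ϑ ^ α) * K * R ^ α =
      K * R ^ α + Ee (kap ϑ ^ α) L.length * K * (kap ϑ ^ α * R ^ α) := by ring
    rw [e]
    refine le_trans (le_of_eq ?_) ((abs_add_le _ _).trans (add_le_add h1 h2))
    congr 1; ring

def scl (ϑ l : ℝ) (L : List (Fld d × ℝ)) : List (Fld d × ℝ) :=
  L.map fun a => (a.1, l ^ fw ϑ a.1 * a.2)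

lemma run_scl {ϑ l : ℝ} (hl : 0 < l) (L : List (Fld d × ℝ)) :
    ∀ p, run (scl ϑ l L) (dil ϑ l p) = dil ϑ l (run L p) := by
  induction L with
  | nil => intro p; rfl
  | cons a L ih =>
    intro p
    have := ih (fl a.1 a.2 p)
    rw [dil_fl hl] at this
    simpa [scl, run] using this

lemma inc_PS {ϑ α : ℝ} {F : Fld d → Pol d} (hF : ∀ j, WLT (wg ϑ) α (F j))
    (L : List (Fld d × ℝ)) :
    ∀ p, PS α (fun l => inc F (scl ϑ l L) (dil ϑ l p)) := by
  induction L with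
  | nil => intro p; simpa [scl, inc] using PS.zero α
  | cons a L ih =>
    intro p
    refine (((PS.eval (hF a.1) (fl a.1 a.2 p)).sub (PS.eval (hF a.1) p)).add
      (ih (fl a.1 a.2 p))).congr fun l hl => ?_
    simp only [dil_fl hl]
    rfl

lemma exists_R {ϑ : ℝ} (hϑ : 0 < ϑ) (L : List (Fld d × ℝ)) :
    ∃ R, 0 < R ∧ ∀ a ∈ L, |a.2| ≤ R ^ fw ϑ a.1 := by
  induction L with
  | nil => exact ⟨1, one_pos, by simp⟩
  | cons a L ih =>
    obtain ⟨R, hR, h⟩ := ih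
    have hω := fw_pos hϑ a.1
    refine ⟨max R (|a.2| ^ (1 / fw ϑ a.1)), lt_max_of_lt_left hR, fun b hb => ?_⟩
    rcases List.mem_cons.1 hb with rfl | hb
    · calc |b.2| = (|b.2| ^ (1 / fw ϑ b.1)) ^ fw ϑ b.1 := by
            rw [← Real.rpow_mul (abs_nonneg _), one_div_mul_cancel hω.ne', Real.rpow_one]
        _ ≤ _ := Real.rpow_le_rpow (by positivity) (le_max_right _ _) hω.le
    · exact (h b hb).trans (Real.rpow_le_rpow hR.le (le_max_left _ _) (fw_pos hϑ _).le)

lemma err_scl {ϑ α K : ℝ} (hϑ : 0 < ϑ) {U : Pt d → ℝ} {F : Fld d → Pol d}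
    (hF : ∀ j, good j → LegOK ϑ α K U (F j) j) (L : List (Fld d × ℝ))
    (hg : ∀ a ∈ L, good a.1) :
    ∃ C, ∀ l, 0 < l → |U (dil ϑ l (run L 0)) - U 0 - inc F (scl ϑ l L) 0| ≤ C * l ^ α := by
  obtain ⟨R, hR, h⟩ := exists_R hϑ L
  refine ⟨Ee (kap ϑ ^ α) L.length * K * R ^ α, fun l hl => ?_⟩
  have := err hϑ hF (scl ϑ l L) (l * R) 0 (by positivity) (box_zero (by positivity))
    (by
      intro a ha
      obtain ⟨b, hb, rfl⟩ := List.mem_map.1 ha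
      exact hg b hb)
    (by
      intro a ha
      obtain ⟨b, hb, rfl⟩ := List.mem_map.1 ha
      have h0 : 0 < l ^ fw ϑ b.1 := by positivity
      simp only
      rw [abs_mul, abs_of_pos h0, Real.mul_rpow hl.le hR.le]
      exact mul_le_mul_of_nonneg_left (h b hb) h0.le)
  have e := run_scl (ϑ := ϑ) hl L 0
  rw [dil_zero] at e
  rw [e, Real.mul_rpow hl.le hR.le] at this
  refine this.trans (le_of_eq ?_)
  simp only [scl, List.length_map]; ring

lemma inc_indep {ϑ α K : ℝ} (hϑ : 0 < ϑ) {U : Pt d → ℝ} {F : Fld d → Pol d}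
    (hW : ∀ j, WLT (wg ϑ) α (F j))
    (hF : ∀ j, good j → LegOK ϑ α K U (F j) j) (L L' : List (Fld d × ℝ))
    (hg : ∀ a ∈ L, good a.1) (hg' : ∀ a ∈ L', good a.1) (h : run L 0 = run L' 0) :
    inc F L 0 = inc F L' 0 := by
  obtain ⟨C, hC⟩ := err_scl hϑ hF L hg
  obtain ⟨C', hC'⟩ := err_scl hϑ hF L' hg'
  have p1 := inc_PS hW L 0
  have p2 := inc_PS hW L' 0
  simp only [dil_zero] at p1 p2
  have key := PS.eq_zero (C := C + C') (p1.sub p2) (fun l hl _ => by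
    have a1 := hC l hl
    have a2 := hC' l hl
    rw [h] at a1
    rw [abs_le] at a1 a2 ⊢
    constructor <;> linarith [a1.1, a1.2, a2.1, a2.2]) 1 one_pos
  have e : ∀ L : List (Fld d × ℝ), scl ϑ 1 L = L := by intro L; simp [scl]
  simp only [e] at key
  linarith

/-! The path. -/

def com (r : ℝ) (w : Pt d) (i : Fin d) : List (Fld d × ℝ) :=
  [(Fld.Z i, r), (Fld.Y, w.2.1 i / r), (Fld.Z i, -r), (Fld.Y, -(w.2.1 i / r))]

def path (r : ℝ) (w : Pt d) : List (Fld d × ℝ) :=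
  (Fld.Y, w.1) :: ((List.finRange d).flatMap (com r w) ++
    (List.finRange d).map fun i => (Fld.Z i, w.2.2 i))

lemma path_good (r : ℝ) (w : Pt d) : ∀ a ∈ path r w, good a.1 := by
  intro a ha
  simp only [path, List.mem_cons, List.mem_append, List.mem_flatMap, List.mem_map, com] at ha
  rcases ha with rfl | ⟨i, _, h⟩ | ⟨i, _, rfl⟩
  · trivial
  · simp at h
    rcases h with rfl | rfl | rfl | rfl <;> trivial
  · trivial

lemma path_length (r : ℝ) (w : Pt d) : (path r w).length = 1 + 5 * d := by
  simp [path, com, List.length_flatMap]; ring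

lemma run_com {r : ℝ} (hr : r ≠ 0) (w : Pt d) (i : Fin d) (t : ℝ)
    (x : EuclideanSpace ℝ (Fin d)) :
    run (com r w i) (t, x, 0) = (t, x + w.2.1 i • EuclideanSpace.single i 1, 0) := by
  simp only [run, com, fl, flowY, flowZ]
  refine Prod.ext (by simp) (Prod.ext ?_ ?_)
  · simp [smul_smul, div_mul_cancel₀ _ hr]
  · simp

lemma run_coms {r : ℝ} (hr : r ≠ 0) (w : Pt d) (l : List (Fin d)) : ∀ (t : ℝ)
    (x : EuclideanSpace ℝ (Fin d)),
    run (l.flatMap (com r w)) (t, x, 0) =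
      (t, x + (l.map fun i => w.2.1 i • EuclideanSpace.single i (1 : ℝ)).sum, 0) := by
  induction l with
  | nil => intro t x; simp [run]
  | cons i l ih =>
    intro t x
    rw [List.flatMap_cons, run_append, run_com hr, ih]
    simp [add_assoc]

lemma run_Zs (w : Pt d) (l : List (Fin d)) : ∀ (t : ℝ) (x v : EuclideanSpace ℝ (Fin d)),
    run (l.map fun i => (Fld.Z i, w.2.2 i)) (t, x, v) =
      (t, x, v + (l.map fun i => w.2.2 i • EuclideanSpace.single i (1 : ℝ)).sum) := by
  induction l with
  | nil => intro t x v; simp [run]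
  | cons i l ih =>
    intro t x v
    simp only [List.map_cons, run, fl, flowZ]
    rw [ih]
    simp [add_assoc]

lemma sum_single (x : EuclideanSpace ℝ (Fin d)) :
    ((List.finRange d).map fun i => x i • EuclideanSpace.single i (1 : ℝ)).sum = x := by
  rw [← Fin.sum_univ_def]
  ext k
  simp [Finset.sum_apply, Pi.single_apply]

lemma run_path {r : ℝ} (hr : r ≠ 0) (w : Pt d) : run (path r w) 0 = w := by
  have h0 : fl Fld.Y w.1 (0 : Pt d) = (w.1, 0, 0) := by simp [fl, flowY]
  simp only [path, run]
  rw [run_append, h0, run_coms hr, run_Zs, sum_single, sum_single]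
  simp

lemma path_le {ϑ R : ℝ} (hR : 0 < R) {w : Pt d} (hw : InBox ϑ R w) :
    ∀ a ∈ path R w, |a.2| ≤ R ^ fw ϑ a.1 := by
  intro a ha
  obtain ⟨h1, h2, h3⟩ := hw
  have hx : ∀ i, |w.2.1 i / R| ≤ R ^ ϑ := by
    intro i
    have := (PiLp.norm_apply_le w.2.1 i).trans h2
    rw [abs_div, abs_of_pos hR, div_le_iff₀ hR]
    rw [Real.norm_eq_abs, Real.rpow_add hR, Real.rpow_one] at this
    linarith
  simp only [path, List.mem_cons, List.mem_append, List.mem_flatMap, List.mem_map, com] at ha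
  rcases ha with rfl | ⟨i, _, h⟩ | ⟨i, _, rfl⟩
  · exact h1
  · simp only [List.mem_nil_iff, or_false] at h
    rcases h with rfl | rfl | rfl | rfl
    · simp [fw, abs_of_pos hR]
    · exact hx i
    · simp [fw, abs_of_pos hR]
    · simp only [abs_neg]; exact hx i
  · simp only [fw, Real.rpow_one]
    exact (PiLp.norm_apply_le w.2.2 i).trans h3

/-! Polynomiality. -/

def flP : Fld d → Pol d → (Sg d → Pol d) → Sg d → Pol d
  | Fld.Y, T, p, s => p s + T * Sum.elim (fun _ => 1) (Sum.elim (fun i => p (sv i)) (fun _ => 0)) s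
  | Fld.Z i, T, p, s => p s + T * (Pi.single (sv i) 1 : Sg d → Pol d) s
  | Fld.X i, T, p, s => p s + T * (Pi.single (sx i) 1 : Sg d → Pol d) s

lemma co_flP (j : Fld d) (T : Pol d) (p : Sg d → Pol d) (w q : Pt d)
    (h : ∀ s, co q s = eval (co w) (p s)) (s : Sg d) :
    co (fl j (eval (co w) T) q) s = eval (co w) (flP j T p s) := by
  cases j with
  | Y =>
    rw [co_flY]
    simp only [flP, map_add, map_mul, ← h s]
    rcases s with s | s | s <;> simp
    left; exact h (sv s)
  | Z i =>
    rw [co_flZ]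
    simp only [flP, map_add, map_mul, ← h s]
    by_cases e : s = sv i
    · subst e; simp
    · simp [Pi.single_apply, e]
  | X i =>
    rw [co_flX]
    simp only [flP, map_add, map_mul, ← h s]
    by_cases e : s = sx i
    · subst e; simp
    · simp [Pi.single_apply, e]

lemma eval_comp (p : Sg d → Pol d) (w q : Pt d)
    (h : ∀ s, co q s = eval (co w) (p s)) (G : Pol d) :
    eval (co q) G = eval (co w) (bind₁ p G) := by
  induction G using MvPolynomial.induction_on with
  | C a => simp
  | add P Q hP hQ => simp [hP, hQ]
  | mul_X P s hP => simp [hP, h]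

lemma inc_poly (F : Fld d → Pol d) (L : List (Fld d × Pol d)) : ∀ (p : Sg d → Pol d),
    ∃ Q : Pol d, ∀ w q : Pt d, (∀ s, co q s = eval (co w) (p s)) →
      inc F (L.map fun a => (a.1, eval (co w) a.2)) q = eval (co w) Q := by
  induction L with
  | nil => intro p; exact ⟨0, fun w q _ => by simp [inc]⟩
  | cons a L ih =>
    intro p
    obtain ⟨Q, hQ⟩ := ih (flP a.1 a.2 p)
    refine ⟨(bind₁ (flP a.1 a.2 p) (F a.1) - bind₁ p (F a.1)) + Q, fun w q h => ?_⟩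
    have h' := co_flP a.1 a.2 p w q h
    simp only [List.map_cons, inc, map_add, map_sub]
    rw [← hQ w _ h', ← eval_comp _ _ _ h', ← eval_comp _ _ _ h]

def pathP (d : ℕ) : List (Fld d × Pol d) :=
  (Fld.Y, X st) :: ((List.finRange d).flatMap (fun i =>
    [(Fld.Z i, 1), (Fld.Y, X (sx i)), (Fld.Z i, -1), (Fld.Y, -X (sx i))]) ++
    (List.finRange d).map fun i => (Fld.Z i, X (sv i)))

lemma pathP_eq (w : Pt d) : (pathP d).map (fun a => (a.1, eval (co w) a.2)) = path 1 w := by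
  simp only [pathP, path, List.map_cons, List.map_append, List.map_flatMap, List.map_map,
    Function.comp_def]
  congr 1
  · simp [co]
  congr 1
  · congr 1; funext a; simp [com, co]
  · simp [co]

theorem path_lemma {ϑ α : ℝ} (hϑ : 0 < ϑ) (hα : 0 < α) {K : ℝ} {U : Pt d → ℝ}
    {F : Fld d → Pol d} (hW : ∀ j, WLT (wg ϑ) α (F j))
    (hF : ∀ j, good j → LegOK ϑ α K U (F j) j) :
    ∃ P : Pol d, WLT (wg ϑ) α P ∧ ∀ R, 0 < R → ∀ w, InBox ϑ R w →
      |U w - eval (co w) P| ≤ Ee (kap ϑ ^ α) (1 + 5 * d) * K * R ^ α := by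
  obtain ⟨G, hG⟩ := inc_poly F (pathP d) (fun _ => 0)
  have hG' : ∀ w, inc F (path 1 w) 0 = eval (co w) G := by
    intro w
    rw [← pathP_eq]
    exact hG w 0 (fun s => by simp [co_zero])
  obtain ⟨Q, hQ, hQe⟩ := exists_wlt (ϑ := ϑ) (α := α) (C (U 0) + G) (by
    intro w
    have p1 := inc_PS hW (path 1 w) 0
    refine ((PS.const hα (U 0)).add p1).congr fun l hl => ?_
    simp only [map_add, eval_C, dil_zero]
    rw [← hG']
    congr 1
    refine inc_indep hϑ hW hF _ _ (path_good _ _) ?_ ?_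
    · intro a ha
      obtain ⟨b, hb, rfl⟩ := List.mem_map.1 ha
      exact path_good 1 w b hb
    · have e := run_scl (ϑ := ϑ) hl (path 1 w) 0
      rw [dil_zero, run_path one_ne_zero] at e
      rw [e, run_path one_ne_zero])
  refine ⟨Q, hQ, fun R hR w hw => ?_⟩
  rw [← hQe w, map_add, eval_C, ← hG',
    inc_indep hϑ hW hF (path 1 w) (path R w) (path_good _ _) (path_good _ _)
      (by rw [run_path one_ne_zero, run_path hR.ne'])]
  have := err hϑ hF (path R w) R 0 hR (box_zero hR) (path_good _ _) (path_le hR hw)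
  rw [run_path hR.ne', path_length] at this
  rwa [← sub_sub]

end ITF

namespace ITF
open MvPolynomial Filter Topology

lemma LegOK.mono {ϑ α K K' : ℝ} {U : Pt d → ℝ} {F : Pol d} {j : Fld d}
    (h : LegOK ϑ α K U F j) (hK : K ≤ K') : LegOK ϑ α K' U F j := fun R hR w hw τ hτ =>
  (h R hR w hw τ hτ).trans (mul_le_mul_of_nonneg_right hK (by positivity))

lemma leg_semi {ϑ α N : ℝ} (hϑ : 0 < ϑ) (hα : 0 < α) (hN : 0 ≤ N) {u : Pt d → ℝ} (j : Fld d)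
    (h : ∀ z τ, |u (fl j τ z) - u z| ≤ N * |τ| ^ (α / fw ϑ j)) (z₀ : Pt d) :
    LegOK ϑ α N (fun w => u (gmul z₀ w)) 0 j := by
  intro R hR w hw τ hτ
  have hω := fw_pos hϑ j
  simp only [map_zero, sub_zero]
  rw [← fl_gmul]
  refine (h _ _).trans (mul_le_mul_of_nonneg_left ?_ hN)
  calc |τ| ^ (α / fw ϑ j) ≤ (R ^ fw ϑ j) ^ (α / fw ϑ j) :=
        Real.rpow_le_rpow (abs_nonneg _) hτ (by positivity)
    _ = R ^ α := by
        rw [← Real.rpow_mul hR.le, mul_div_cancel₀ _ hω.ne']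

lemma semi_bound {N : ℝ≥0∞} (hN : N ≠ ⊤) {a b q : ℝ} (hab : a ≠ 0 → ENNReal.ofReal (|b| / |a| ^ q) ≤ N)
    (h0 : a = 0 → b = 0) : |b| ≤ N.toReal * |a| ^ q := by
  by_cases ha : a = 0
  · rw [h0 ha, abs_zero]; positivity
  · have h1 := hab ha
    have hp : 0 < |a| ^ q := by
      have := abs_pos.2 ha
      positivity
    rw [ENNReal.ofReal_le_iff_le_toReal hN, div_le_iff₀ hp] at h1
    exact h1

lemma legY_semi {ϑ α : ℝ} (hϑ : 0 < ϑ) (hα : 0 < α) {N : ℝ≥0∞} (hN : N ≠ ⊤) {u : Pt d → ℝ}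
    (h : semiY ϑ α u ≤ N) (z₀ : Pt d) :
    LegOK ϑ α N.toReal (fun w => u (gmul z₀ w)) 0 Fld.Y := by
  refine leg_semi hϑ hα ENNReal.toReal_nonneg _ (fun z τ => semi_bound hN ?_ ?_) z₀
  · intro hτ
    refine le_trans ?_ h
    exact le_iSup_of_le z (le_iSup_of_le τ (le_iSup_of_le hτ le_rfl))
  · rintro rfl; rw [fl_zero, sub_self]

lemma legZ_semi {ϑ α : ℝ} (hϑ : 0 < ϑ) (hα : 0 < α) {N : ℝ≥0∞} (hN : N ≠ ⊤) {u : Pt d → ℝ}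
    (i : Fin d) (h : semiZ i α u ≤ N) (z₀ : Pt d) :
    LegOK ϑ α N.toReal (fun w => u (gmul z₀ w)) 0 (Fld.Z i) := by
  refine leg_semi hϑ hα ENNReal.toReal_nonneg _ (fun z τ => semi_bound hN ?_ ?_) z₀
  · intro hτ
    refine le_trans ?_ h
    simp only [fw, div_one]
    exact le_iSup_of_le z (le_iSup_of_le τ (le_iSup_of_le hτ le_rfl))
  · rintro rfl; rw [fl_zero, sub_self]

lemma leg_der {ϑ α M : ℝ} (hϑ : 0 < ϑ) (hM : 0 ≤ M) {u : Pt d → ℝ} (j : Fld d)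
    (hj : fw ϑ j < α) (hu : ∀ z, HasLieAt (fl j) u z) (z₀ : Pt d) {Q : Pol d}
    (hQ : WLT (wg ϑ) (α - fw ϑ j) Q)
    (hb : ∀ R, 0 < R → ∀ w, InBox ϑ R w →
      |deriv (fun τ => u (fl j τ (gmul z₀ w))) 0 - eval (co w) Q| ≤ M * R ^ (α - fw ϑ j)) :
    ∃ F : Pol d, WLT (wg ϑ) α F ∧
      LegOK ϑ α (M * kap ϑ ^ (α - fw ϑ j)) (fun w => u (gmul z₀ w)) F j := by
  obtain ⟨F, hF, hFQ⟩ := exists_antiD ϑ _ j Q hQ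
  rw [sub_add_cancel] at hF
  refine ⟨F, hF, fun R hR w hw τ hτ => ?_⟩
  have hω := fw_pos hϑ j
  have hk : 2 ≤ kap ϑ := kap_ge ϑ
  have hder : ∀ s, HasDerivAt
      (fun s => u (gmul z₀ (fl j s w)) - eval (co (fl j s w)) F)
      (deriv (fun τ => u (fl j τ (gmul z₀ (fl j s w)))) 0 - eval (co (fl j s w)) Q) s := by
    intro s
    have h1 := hasDerivAt_fl j F w s
    rw [hFQ] at h1
    refine HasDerivAt.sub ?_ h1
    have h2 : HasDerivAt (fun τ => u (fl j τ (gmul z₀ (fl j s w)))) _ 0 :=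
      (hu (gmul z₀ (fl j s w))).hasDerivAt
    have h3 : HasDerivAt (fun r : ℝ => r - s) 1 s := (hasDerivAt_id s).sub_const s
    have h4 := HasDerivAt.comp_of_eq s h2 h3 (sub_self s).symm
    rw [mul_one] at h4
    refine h4.congr_of_eventuallyEq (Eventually.of_forall fun r => ?_)
    simp only [Function.comp]
    rw [fl_gmul, ← fl_add, add_sub_cancel]
  have hRω : 0 ≤ R ^ fw ϑ j := by positivity
  have key := Convex.norm_image_sub_le_of_norm_hasDerivWithin_le
    (C := M * (kap ϑ * R) ^ (α - fw ϑ j)) (s := Set.Icc (-(R ^ fw ϑ j)) (R ^ fw ϑ j))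
    (fun s _ => (hder s).hasDerivWithinAt)
    (fun s hs => by
      rw [Real.norm_eq_abs]
      exact hb _ (by positivity) _ (fl_box hϑ j hR hw (abs_le.2 hs)))
    (convex_Icc _ _) (x := 0) (y := τ) ⟨by linarith, hRω⟩ (abs_le.1 hτ)
  rw [Real.norm_eq_abs, Real.norm_eq_abs, sub_zero, fl_zero] at key
  refine key.trans ?_
  have e : M * kap ϑ ^ (α - fw ϑ j) * R ^ α =
      M * (kap ϑ * R) ^ (α - fw ϑ j) * R ^ fw ϑ j := by
    rw [Real.mul_rpow (by linarith) hR.le, Real.rpow_sub hR]; field_simp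
  rw [e]
  exact mul_le_mul_of_nonneg_left hτ (by positivity)

/-- The approximation claim at a given level of the recursion. -/
def Cl (d : ℕ) (ϑ : ℝ) (n : ℕ) (α : ℝ) : Prop :=
  ∃ C : ℝ, 0 ≤ C ∧ ∀ u : Pt d → ℝ, memAux ϑ n α u → ∀ z₀ : Pt d, ∃ P : Pol d,
    WLT (wg ϑ) α P ∧ ∀ R, 0 < R → ∀ w, InBox ϑ R w →
      |u (gmul z₀ w) - eval (co w) P| ≤ C * (hNormAux ϑ n α u).toReal * R ^ α

lemma Cl.leg {ϑ α ω : ℝ} {n : ℕ} (hϑ : 0 < ϑ) (hω : ω < α) (h : Cl d ϑ n (α - ω)) :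
    ∃ c : ℝ, 0 ≤ c ∧ ∀ j : Fld d, fw ϑ j = ω → ∀ u : Pt d → ℝ, (∀ z, HasLieAt (fl j) u z) →
      memAux ϑ n (α - ω) (fun z => deriv (fun τ => u (fl j τ z)) 0) → ∀ N : ℝ≥0∞, N ≠ ⊤ →
      hNormAux ϑ n (α - ω) (fun z => deriv (fun τ => u (fl j τ z)) 0) ≤ N → ∀ z₀ : Pt d,
      ∃ F : Pol d, WLT (wg ϑ) α F ∧ LegOK ϑ α (c * N.toReal) (fun w => u (gmul z₀ w)) F j := by
  obtain ⟨C, hC, hc⟩ := h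
  have hk : 2 ≤ kap ϑ := kap_ge ϑ
  refine ⟨C * kap ϑ ^ (α - ω), by positivity, ?_⟩
  rintro j rfl u hu hm N hN hle z₀
  obtain ⟨Q, hQ, hb⟩ := hc _ hm z₀
  obtain ⟨F, hF, hL⟩ := leg_der (M := C * N.toReal) hϑ (by positivity) j hω hu z₀ hQ
    (fun R hR w hw => (hb R hR w hw).trans (by
      have := ENNReal.toReal_mono hN hle
      gcongr))
  exact ⟨F, hF, hL.mono (le_of_eq (by ring))⟩

lemma Cl.comb {ϑ α : ℝ} {n : ℕ} (hϑ : 0 < ϑ) (hα : 0 < α) {c : ℝ} (hc : 0 ≤ c)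
    (h : ∀ u : Pt d → ℝ, memAux ϑ n α u → ∀ (z₀ : Pt d) (j : Fld d), good j →
      ∃ F : Pol d, WLT (wg ϑ) α F ∧
        LegOK ϑ α (c * (hNormAux ϑ n α u).toReal) (fun w => u (gmul z₀ w)) F j) :
    Cl d ϑ n α := by
  have hk : 2 ≤ kap ϑ := kap_ge ϑ
  have hE : 0 ≤ Ee (kap ϑ ^ α) (1 + 5 * d) := Ee_nonneg (by positivity) _
  refine ⟨Ee (kap ϑ ^ α) (1 + 5 * d) * c, by positivity, fun u hu z₀ => ?_⟩
  have h1 : ∀ j : Fld d, ∃ F : Pol d, WLT (wg ϑ) α F ∧ (good j →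
        LegOK ϑ α (c * (hNormAux ϑ n α u).toReal) (fun w => u (gmul z₀ w)) F j) := by
    intro j
    by_cases hj : good j
    · obtain ⟨F, h1, h2⟩ := h u hu z₀ j hj
      exact ⟨F, h1, fun _ => h2⟩
    · exact ⟨0, WLT.zero _ _, fun h => absurd h hj⟩
  choose F hF1 hF2 using h1
  obtain ⟨P, hP, hb⟩ := path_lemma hϑ hα hF1 hF2
  refine ⟨P, hP, fun R hR w hw => (hb R hR w hw).trans (le_of_eq (by ring))⟩

lemma Cl.semi {ϑ α : ℝ} {n : ℕ} (hϑ : 0 < ϑ) (hα : 0 < α)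
    (hn : ∀ u : Pt d → ℝ, hNormAux ϑ n α u = semiY ϑ α u + ∑ i, semiZ i α u)
    (hm : ∀ u : Pt d → ℝ, memAux ϑ n α u → hNormAux ϑ n α u ≠ ⊤) : Cl d ϑ n α := by
  refine Cl.comb hϑ hα zero_le_one fun u hu z₀ j hj => ⟨0, WLT.zero _ _, ?_⟩
  rw [one_mul]
  have hN := hm u hu
  cases j with
  | Y => exact legY_semi hϑ hα hN (by rw [hn]; exact le_self_add) z₀
  | Z i =>
    refine legZ_semi hϑ hα hN i ?_ z₀
    rw [hn]
    exact (Finset.single_le_sum (f := fun i => semiZ i α u) (fun _ _ => zero_le)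
      (Finset.mem_univ i)).trans le_add_self
  | X i => exact hj.elim

theorem Cl.all {ϑ : ℝ} (hϑ : 0 < ϑ) (n : ℕ) : ∀ α, 0 < α → Cl d ϑ n α := by
  induction n with
  | zero => exact fun α hα => Cl.semi hϑ hα (fun u => rfl) (fun u h => h)
  | succ n ih =>
    intro α hα
    by_cases h1 : α ≤ min 1 ϑ
    · refine Cl.semi hϑ hα (fun u => by simp only [hNormAux, if_pos h1]) (fun u h => ?_)
      rw [memAux, if_pos h1] at h
      exact h
    by_cases h2 : α ≤ max 1 ϑ
    · by_cases h3 : ϑ < 1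
      · have hϑα : ϑ < α := by
          rw [min_eq_right h3.le] at h1; exact not_le.1 h1
        obtain ⟨c, hc, hleg⟩ := (ih (α - ϑ) (by linarith)).leg hϑ hϑα
        refine Cl.comb hϑ hα (c := max 1 c) (by positivity) fun u hu z₀ j hj => ?_
        have hn : hNormAux ϑ (n + 1) α u =
            hNormAux ϑ n (α - ϑ) (lieY u) + ∑ i, semiZ i α u := by
          simp only [hNormAux, if_neg h1, if_pos h2, if_pos h3]
        rw [memAux, if_neg h1, if_pos h2, if_pos h3] at hu
        obtain ⟨m1, m2, hN⟩ := hu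
        cases j with
        | Y =>
          obtain ⟨F, hF, hL⟩ := hleg Fld.Y rfl u m1 m2 _ hN (by
            rw [hn]; exact le_self_add) z₀
          exact ⟨F, hF, hL.mono (mul_le_mul_of_nonneg_right (le_max_right _ _)
            ENNReal.toReal_nonneg)⟩
        | Z i =>
          refine ⟨0, WLT.zero _ _, (legZ_semi hϑ hα hN i ?_ z₀).mono ?_⟩
          · rw [hn]
            exact (Finset.single_le_sum (f := fun i => semiZ i α u) (fun _ _ => zero_le)
              (Finset.mem_univ i)).trans le_add_self
          · exact le_mul_of_one_le_left ENNReal.toReal_nonneg (le_max_left _ _)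
        | X i => exact hj.elim
      · have h1α : 1 < α := by
          rw [min_eq_left (not_lt.1 h3)] at h1; exact not_le.1 h1
        obtain ⟨c, hc, hleg⟩ := (ih (α - 1) (by linarith)).leg hϑ h1α
        refine Cl.comb hϑ hα (c := max 1 c) (by positivity) fun u hu z₀ j hj => ?_
        have hn : hNormAux ϑ (n + 1) α u =
            semiY ϑ α u + ∑ i, hNormAux ϑ n (α - 1) (dv i u) := by
          simp only [hNormAux, if_neg h1, if_pos h2, if_neg h3]
        rw [memAux, if_neg h1, if_pos h2, if_neg h3] at hu
        obtain ⟨m1, m2, hN⟩ := hu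
        cases j with
        | Z i =>
          obtain ⟨F, hF, hL⟩ := hleg (Fld.Z i) rfl u (m1 i) (m2 i) _ hN (by
            rw [hn]
            exact (Finset.single_le_sum (f := fun i => hNormAux ϑ n (α - 1) (dv i u))
              (fun _ _ => zero_le) (Finset.mem_univ i)).trans le_add_self) z₀
          exact ⟨F, hF, hL.mono (mul_le_mul_of_nonneg_right (le_max_right _ _)
            ENNReal.toReal_nonneg)⟩
        | Y =>
          refine ⟨0, WLT.zero _ _, (legY_semi hϑ hα hN ?_ z₀).mono ?_⟩
          · rw [hn]; exact le_self_add
          · exact le_mul_of_one_le_left ENNReal.toReal_nonneg (le_max_left _ _)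
        | X i => exact hj.elim
    · have h1α : 1 < α := (le_max_left _ _).trans_lt (not_le.1 h2)
      have hϑα : ϑ < α := (le_max_right _ _).trans_lt (not_le.1 h2)
      obtain ⟨c, hc, hleg⟩ := (ih (α - ϑ) (by linarith)).leg hϑ hϑα
      obtain ⟨c', hc', hleg'⟩ := (ih (α - 1) (by linarith)).leg hϑ h1α
      refine Cl.comb hϑ hα (c := max c c') (le_max_of_le_left hc) fun u hu z₀ j hj => ?_
      have hn : hNormAux ϑ (n + 1) α u =
          hNormAux ϑ n (α - ϑ) (lieY u) + ∑ i, hNormAux ϑ n (α - 1) (dv i u) := by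
        simp only [hNormAux, if_neg h1, if_neg h2]
      rw [memAux, if_neg h1, if_neg h2] at hu
      obtain ⟨m1, m2, m3, m4, hN⟩ := hu
      cases j with
      | Y =>
        obtain ⟨F, hF, hL⟩ := hleg Fld.Y rfl u m1 m2 _ hN (by
          rw [hn]; exact le_self_add) z₀
        exact ⟨F, hF, hL.mono (mul_le_mul_of_nonneg_right (le_max_left _ _)
          ENNReal.toReal_nonneg)⟩
      | Z i =>
        obtain ⟨F, hF, hL⟩ := hleg' (Fld.Z i) rfl u (m3 i) (m4 i) _ hN (by
          rw [hn]
          exact (Finset.single_le_sum (f := fun i => hNormAux ϑ n (α - 1) (dv i u))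
            (fun _ _ => zero_le) (Finset.mem_univ i)).trans le_add_self) z₀
        exact ⟨F, hF, hL.mono (mul_le_mul_of_nonneg_right (le_max_right _ _)
          ENNReal.toReal_nonneg)⟩
      | X i => exact hj.elim

theorem main (d : ℕ) (ϑ : ℝ) (hϑ : 0 < ϑ) (α : ℝ) (hα : 0 < α) :
    ∃ c : ℝ, 0 < c ∧ ∀ u : Pt d → ℝ, IsHolder ϑ α u →
      ∀ z z₀ : Pt d,
        |u z - taylorPoly ϑ α u z₀ z| ≤
          c * (holderNorm ϑ α u).toReal * hnorm ϑ (gmul (ginv z₀) z) ^ α := by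
  obtain ⟨C, hC, hc⟩ := Cl.all (d := d) hϑ (fuel ϑ α) α hα
  refine ⟨C + 1, by linarith, fun u hu z z₀ => ?_⟩
  choose P hP hb using hc u hu
  have hA : Apx ϑ α u P := ⟨C * (holderNorm ϑ α u).toReal, fun z₀ => ⟨hP z₀, hb z₀⟩⟩
  rw [taylor_eq hϑ hα hA]
  have h0 : 0 ≤ hnorm ϑ (gmul (ginv z₀) z) := by unfold hnorm; positivity
  have h1 : |u z - eval (co (gmul (ginv z₀) z)) (P z₀)| ≤
      C * (holderNorm ϑ α u).toReal * hnorm ϑ (gmul (ginv z₀) z) ^ α := by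
    refine le_of_scale hα fun R hR => ?_
    have := hb z₀ R (h0.trans_lt hR) _ (box_hnorm hϑ hR.le)
    rwa [gmul_ginv] at this
  refine h1.trans ?_
  have : (0 : ℝ) ≤ (holderNorm ϑ α u).toReal := ENNReal.toReal_nonneg
  gcongr
  linarith

end ITF

/-- Intrinsic Taylor formula: for every `α > 0` there is `c > 0`, depending only on `d`, `ϑ`
and `α`, such that for `u ∈ C^α`,
`|u(z) − T_α u(z₀; z)| ≤ c ‖u‖_{C^α} ‖z₀⁻¹ ∘ z‖^α` for all `z, z₀`. -/
theorem intrinsic_taylor_formula (d : ℕ) (hd : 1 ≤ d) (ϑ : ℝ) (hϑ : 0 < ϑ)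
    (α : ℝ) (hα : 0 < α) :
    ∃ c : ℝ, 0 < c ∧ ∀ u : Pt d → ℝ, IsHolder ϑ α u →
      ∀ z z₀ : Pt d,
        |u z - taylorPoly ϑ α u z₀ z| ≤
          c * (holderNorm ϑ α u).toReal * hnorm ϑ (gmul (ginv z₀) z) ^ α := by
  exact ITF.main d ϑ hϑ α hα

end
end
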